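/- arXiv:0706.0272 — 6 statements merged into one kernel-verified Lean document; each statement's English description precedes it below -/
import Mathlib

section
/- Let ℓ be a prime, k ≥ 1 an integer, and let χ ∈ ℤ[X] be a monic polynomial of degree m ≥ 1. Let f_1, …, f_s be the degrees of the distinct monic irreducible factors of the reduction of χ modulo ℓ. Let γ be the smallest natural number such that ℓ^γ ≥ m, and set A_k = ℓ^{γ + k − 1} · Π_{i=1}^{s}(ℓ^{f_i} − 1). Then every unit u of the quotient ring (ℤ/ℓ^kℤ)[X]/(χ) satisfies u^{A_k} = 1; that is, the exponent of the unit group U_k = ((ℤ/ℓ^kℤ)[X]/χ)^* divides A_k. -/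
/-!
Work over a commutative ring `R` with finite residue field `F = R / I` of characteristic `p`, where
`I ^ (k + 1) = 0`. If `χ` reduces to `∏ hᵢ ^ eᵢ` over `F`, a unit `u` of `R[X] / (χ)` lifts to a
polynomial whose reduction `a` is prime to every `hᵢ`. As `F[X] / (hᵢ)` is a field with
`|F| ^ deg hᵢ` elements, each `hᵢ` divides `a ^ N - 1` for every common multiple `N` of the numbers
`|F| ^ deg hᵢ - 1`. Raising to the power `p ^ γ` is additive over `F`, so `∏ hᵢ ^ eᵢ` divides
`a ^ (N * p ^ γ) - 1` as soon as all `eᵢ ≤ p ^ γ`. Hence `u ^ (N * p ^ γ) ≡ 1` modulo `I`, and each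
further `p`-th power improves such a congruence from `I ^ n` to `I ^ (n + 1)`.
-/

open Polynomial

section Ideals

variable {R : Type*} [CommRing R]

theorem isUnit_mk_span_singleton_iff_isCoprime {a g : R} :
    IsUnit (Ideal.Quotient.mk (Ideal.span {g}) a) ↔ IsCoprime a g := by
  rw [isUnit_iff_exists_inv', Ideal.Quotient.mk_surjective.exists]
  simp only [← map_mul, ← map_one (Ideal.Quotient.mk (Ideal.span {g})), Ideal.Quotient.eq,
    Ideal.mem_span_singleton']
  refine exists_congr fun b => neg_surjective.exists.trans (exists_congr fun c => ?_)
  constructor <;> intro h <;> linear_combination -h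

theorem pow_sub_pow_mem_ideal_pow_succ {J : Ideal R} {p : ℕ} (hp : (p : R) ∈ J) {x y : R} {n : ℕ}
    (hn : n ≠ 0) (hxy : x - y ∈ J ^ n) : x ^ p - y ^ p ∈ J ^ (n + 1) := by
  have geom_sum_mem : ∑ i ∈ Finset.range p, x ^ i * y ^ (p - 1 - i) ∈ J := by
    have hxy_mod : Ideal.Quotient.mk J x = Ideal.Quotient.mk J y :=
      Ideal.Quotient.eq.2 (Ideal.pow_le_self hn hxy)
    have hp_mod : (p : R ⧸ J) = 0 := by
      rw [← map_natCast (Ideal.Quotient.mk J), Ideal.Quotient.eq_zero_iff_mem.2 hp]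
    rw [← Ideal.Quotient.eq_zero_iff_mem, RingHom.map_geom_sum₂, hxy_mod, geom_sum₂_self, hp_mod,
      zero_mul]
  rw [← geom_sum₂_mul, mul_comm, pow_succ]
  exact Ideal.mul_mem_mul hxy geom_sum_mem

theorem pow_pow_sub_pow_pow_mem_ideal_pow {J : Ideal R} {p : ℕ} (hp : (p : R) ∈ J) {x y : R}
    (hxy : x - y ∈ J) (n : ℕ) : x ^ p ^ n - y ^ p ^ n ∈ J ^ (n + 1) := by
  induction n with
  | zero => simpa using hxy
  | succ n ih =>
    rw [pow_succ p, pow_mul, pow_mul]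
    exact pow_sub_pow_mem_ideal_pow_succ hp n.succ_ne_zero ih

end Ideals

theorem ker_zmod_castHom {m n : ℕ} (h : m ∣ n) :
    RingHom.ker (ZMod.castHom h (ZMod m)) = Ideal.span {(m : ZMod n)} := by
  refine le_antisymm (fun x hx => ?_) ?_
  · obtain ⟨z, rfl⟩ := ZMod.intCast_surjective x
    rw [RingHom.mem_ker, map_intCast, ZMod.intCast_zmod_eq_zero_iff_dvd] at hx
    simpa [Ideal.mem_span_singleton] using map_dvd (Int.castRingHom (ZMod n)) hx
  · rw [Ideal.span_singleton_le_iff_mem, RingHom.mem_ker, map_natCast, ZMod.natCast_self]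

theorem ker_zmod_castHom_pow_eq_bot {m k : ℕ} (h : m ∣ m ^ k) :
    RingHom.ker (ZMod.castHom h (ZMod m)) ^ k = ⊥ := by
  rw [ker_zmod_castHom, Ideal.span_singleton_pow, ← Nat.cast_pow, ZMod.natCast_self,
    Ideal.span_singleton_zero]

theorem le_natDegree_of_eq_prod_pow {R ι : Type*} [CommSemiring R] [NoZeroDivisors R] [Fintype ι]
    {g : R[X]} {h : ι → R[X]} {e : ι → ℕ} (hg : g ≠ 0) (hfac : g = ∏ i, h i ^ e i) {i : ι}
    (hh : 0 < (h i).natDegree) : e i ≤ g.natDegree :=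
  calc
    e i ≤ e i * (h i).natDegree := Nat.le_mul_of_pos_right _ hh
    _ = (h i ^ e i).natDegree := (natDegree_pow _ _).symm
    _ ≤ g.natDegree := natDegree_le_of_dvd
      (hfac ▸ Finset.dvd_prod_of_mem (fun i => h i ^ e i) (Finset.mem_univ i)) hg

theorem pairwise_isCoprime_of_monic_irreducible {F ι : Type*} [Field F] {h : ι → F[X]}
    (hmonic : ∀ i, (h i).Monic) (hirr : ∀ i, Irreducible (h i)) (hinj : Function.Injective h) :
    Pairwise (Function.onFun IsCoprime h) := fun i j hij =>
  (hirr i).coprime_iff_not_dvd.2 fun hdvd => hij <| hinj <|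
    eq_of_monic_of_associated (hmonic i) (hmonic j) ((hirr i).associated_of_dvd (hirr j) hdvd)

theorem mk_mem_map_ker_of_map_dvd_map {R S : Type*} [CommRing R] [CommRing S] {π : R →+* S}
    (hπ : Function.Surjective π) {g b : R[X]} (hdvd : g.map π ∣ b.map π) :
    Ideal.Quotient.mk (Ideal.span {g}) b ∈
      (RingHom.ker π).map ((Ideal.Quotient.mk (Ideal.span {g})).comp C) := by
  obtain ⟨c, hc⟩ := hdvd
  obtain ⟨d, rfl⟩ := map_surjective π hπ c
  have hmem : b - g * d ∈ (RingHom.ker π).map C := by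
    rw [← ker_mapRingHom, RingHom.mem_ker, coe_mapRingHom, Polynomial.map_sub, Polynomial.map_mul,
      hc, sub_self]
  have hmk : Ideal.Quotient.mk (Ideal.span {g}) b =
      Ideal.Quotient.mk (Ideal.span {g}) (b - g * d) :=
    Ideal.Quotient.eq.2 (Ideal.mem_span_singleton.2 ⟨d, sub_sub_cancel b _⟩)
  rw [hmk, ← Ideal.map_map]
  exact Ideal.mem_map_of_mem _ hmem

section FiniteField

variable {F : Type*} [Field F] [Finite F]

theorem irreducible_dvd_pow_card_pow_natDegree_sub_one {h a : F[X]} (hirr : Irreducible h)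
    (ha : ¬ h ∣ a) : h ∣ a ^ (Nat.card F ^ h.natDegree - 1) - 1 := by
  have : Fact (Irreducible h) := ⟨hirr⟩
  let basis := AdjoinRoot.powerBasis hirr.ne_zero
  have : Module.Finite F (AdjoinRoot h) := basis.finite
  have : Finite (AdjoinRoot h) := Module.finite_of_finite F
  have : Fintype (AdjoinRoot h) := Fintype.ofFinite _
  have card_eq : Fintype.card (AdjoinRoot h) = Nat.card F ^ h.natDegree := by
    rw [← Nat.card_eq_fintype_card, Module.natCard_eq_pow_finrank (K := F), basis.finrank,
      AdjoinRoot.powerBasis_dim]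
  rw [← AdjoinRoot.mk_eq_zero, map_sub, map_pow, map_one, sub_eq_zero, ← card_eq]
  exact FiniteField.pow_card_sub_one_eq_one _ (mt AdjoinRoot.mk_eq_zero.1 ha)

variable {p : ℕ} [Fact p.Prime] [CharP F p] {ι : Type*} [Fintype ι] {h : ι → F[X]} {e : ι → ℕ}
  {γ N : ℕ}

theorem prod_irreducible_pow_dvd_pow_sub_one (hirr : ∀ i, Irreducible (h i))
    (hcop : Pairwise (Function.onFun IsCoprime h)) (he : ∀ i, e i ≤ p ^ γ)
    (hN : ∀ i, Nat.card F ^ (h i).natDegree - 1 ∣ N) {a : F[X]}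
    (ha : IsCoprime a (∏ i, h i ^ e i)) : ∏ i, h i ^ e i ∣ a ^ (N * p ^ γ) - 1 := by
  refine Finset.prod_dvd_of_coprime (fun i _ j _ hij => (hcop hij).pow) fun i hi => ?_
  rcases eq_or_ne (e i) 0 with hei | hei
  · simp [hei]
  have not_dvd : ¬ h i ∣ a := fun hdvd =>
    (hirr i).not_isUnit <| ha.isUnit_of_dvd' hdvd <|
      (dvd_pow_self _ hei).trans (Finset.dvd_prod_of_mem (fun i => h i ^ e i) hi)
  have dvd_pow_sub_one : h i ∣ a ^ N - 1 :=
    (irreducible_dvd_pow_card_pow_natDegree_sub_one (hirr i) not_dvd).trans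
      (dvd_pow_sub_one_of_dvd (hN i))
  rw [pow_mul, ← one_pow (p ^ γ), ← sub_pow_char_pow]
  exact (pow_dvd_pow _ (he i)).trans (pow_dvd_pow_of_dvd dvd_pow_sub_one _)

theorem stmt_5_general {R : Type*} [CommRing R] {π : R →+* F} (hπ : Function.Surjective π) {k : ℕ}
    (hker : RingHom.ker π ^ (k + 1) = ⊥) {χ : R[X]} (hirr : ∀ i, Irreducible (h i))
    (hcop : Pairwise (Function.onFun IsCoprime h)) (hfac : χ.map π = ∏ i, h i ^ e i)
    (he : ∀ i, e i ≤ p ^ γ) (hN : ∀ i, Nat.card F ^ (h i).natDegree - 1 ∣ N)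
    (u : (R[X] ⧸ Ideal.span {χ})ˣ) : u ^ (p ^ (γ + k) * N) = 1 := by
  obtain ⟨a, ha⟩ := Ideal.Quotient.mk_surjective (u : R[X] ⧸ Ideal.span {χ})
  let J := (RingHom.ker π).map ((Ideal.Quotient.mk (Ideal.span {χ})).comp C)
  have a_coprime : IsCoprime (a.map π) (∏ i, h i ^ e i) := by
    rw [← hfac]
    exact (isUnit_mk_span_singleton_iff_isCoprime.1 (ha ▸ u.isUnit)).map (mapRingHom π)
  have map_dvd : χ.map π ∣ (a ^ (N * p ^ γ) - 1).map π := by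
    rw [hfac, Polynomial.map_sub, Polynomial.map_pow, Polynomial.map_one]
    exact prod_irreducible_pow_dvd_pow_sub_one hirr hcop he hN a_coprime
  have congr_mod_J : (u : R[X] ⧸ Ideal.span {χ}) ^ (N * p ^ γ) - 1 ∈ J := by
    simpa only [map_sub, map_pow, map_one, ha] using mk_mem_map_ker_of_map_dvd_map hπ map_dvd
  have p_mem : (p : R[X] ⧸ Ideal.span {χ}) ∈ J := by
    have : (p : R) ∈ RingHom.ker π := by rw [RingHom.mem_ker, map_natCast, CharP.cast_eq_zero]
    simpa only [map_natCast] using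
      Ideal.mem_map_of_mem ((Ideal.Quotient.mk (Ideal.span {χ})).comp C) this
  have J_pow : J ^ (k + 1) = ⊥ := by rw [← Ideal.map_pow, hker, Ideal.map_bot]
  have lifted := pow_pow_sub_pow_pow_mem_ideal_pow p_mem congr_mod_J k
  rw [J_pow, Ideal.mem_bot, sub_eq_zero, one_pow, ← pow_mul] at lifted
  ext
  rw [Units.val_pow_eq_pow_val, Units.val_one, ← lifted]
  ring

end FiniteField

/-- Let `χ ∈ ℤ[X]` be monic of degree `m ≥ 1`, and let `f₁,…,f_s` be the degrees of the
distinct monic irreducible factors of `χ mod ℓ`.  Let `γ` be minimal with `ℓ^γ ≥ m` and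
`A_k = ℓ^{γ+k−1}·∏(ℓ^{fᵢ}−1)`.  Then every unit of `(ℤ/ℓ^kℤ)[X]/(χ)` satisfies
`u^{A_k} = 1`. -/
theorem stmt_5 (ℓ k : ℕ) (hℓ : Nat.Prime ℓ) (hk : 1 ≤ k)
    (χ : Polynomial ℤ) (hmonic : χ.Monic) (m : ℕ) (hm : χ.natDegree = m) (hm1 : 1 ≤ m)
    (s : ℕ) (χi : Fin s → Polynomial (ZMod ℓ)) (e f : Fin s → ℕ)
    (he : ∀ i, 1 ≤ e i)
    (hmono : ∀ i, (χi i).Monic) (hirr : ∀ i, Irreducible (χi i))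
    (hinj : Function.Injective χi)
    (hdegi : ∀ i, (χi i).natDegree = f i)
    (hfac : χ.map (Int.castRingHom (ZMod ℓ)) = ∏ i, χi i ^ e i)
    (γ : ℕ) (hγ : m ≤ ℓ ^ γ) (hγmin : ∀ δ : ℕ, m ≤ ℓ ^ δ → γ ≤ δ) :
    ∀ u : (Polynomial (ZMod (ℓ ^ k)) ⧸
        Ideal.span {χ.map (Int.castRingHom (ZMod (ℓ ^ k)))})ˣ,
      u ^ (ℓ ^ (γ + k - 1) * ∏ i, (ℓ ^ f i - 1)) = 1 := by
  obtain ⟨k, rfl⟩ := Nat.exists_eq_add_of_le' hk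
  have : Fact ℓ.Prime := ⟨hℓ⟩
  let π := ZMod.castHom (dvd_pow_self ℓ k.succ_ne_zero) (ZMod ℓ)
  have ker_pow : RingHom.ker π ^ (k + 1) = ⊥ := ker_zmod_castHom_pow_eq_bot _
  have map_π : (χ.map (Int.castRingHom (ZMod (ℓ ^ (k + 1))))).map π = ∏ i, χi i ^ e i := by
    rw [Polynomial.map_map, RingHom.ext_int (π.comp _) (Int.castRingHom (ZMod ℓ)), hfac]
  have exponent_le (i : Fin s) : e i ≤ ℓ ^ γ :=
    (le_natDegree_of_eq_prod_pow (hmonic.map _).ne_zero hfac (hirr i).natDegree_pos).trans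
      (natDegree_map_le.trans (hm.trans_le hγ))
  have dvd_prod (i : Fin s) : Nat.card (ZMod ℓ) ^ (χi i).natDegree - 1 ∣ ∏ i, (ℓ ^ f i - 1) := by
    rw [Nat.card_zmod, hdegi]
    exact Finset.dvd_prod_of_mem (fun i => ℓ ^ f i - 1) (Finset.mem_univ i)
  exact stmt_5_general (ZMod.castHom_surjective _) ker_pow hirr
    (pairwise_isCoprime_of_monic_irreducible hmono hirr hinj) map_π exponent_le dvd_prod
end

section
/- Let ℓ be a prime, k ≥ 1 an integer, and let χ ∈ ℤ[X] be a monic polynomial of degree 2g ≥ 1 whose constant term χ(0) is not divisible by ℓ. Let f_1, …, f_s be the degrees of the distinct monic irreducible factors of χ modulo ℓ, let B = Π_{i=1}^{s}(ℓ^{f_i} − 1), let γ be the smallest natural number with ℓ^γ ≥ 2g, and set A_k = B·ℓ^{γ + k − 1}. Then X^{A_k} − 1 belongs to the ideal (ℓ^k, χ(X)) of ℤ[X]; more precisely, there exists a unique polynomial M_k ∈ ℤ[X] with deg(M_k) < 2g such that χ divides X^{A_k} − 1 − ℓ^k·M_k in ℤ[X]. -/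
/-!
Over a finite field with `q` elements, an irreducible polynomial of degree `f` other than `X` (up to
units) divides `X ^ (q ^ f - 1) - 1`, so every irreducible factor of `χ` modulo `ℓ` divides
`X ^ B - 1`. Counted with multiplicity there are at most `deg χ ≤ ℓ ^ γ` of them, hence `χ` modulo
`ℓ` divides `(X ^ B - 1) ^ ℓ ^ γ = X ^ (B * ℓ ^ γ) - 1`. This says that the class of
`X ^ (B * ℓ ^ γ)` in `ℤ[X] / (χ)` is congruent to `1` modulo `ℓ`, and raising such a congruence to
the power `ℓ ^ (k - 1)` improves it to one modulo `ℓ ^ k`.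
-/

open Polynomial

section Field

variable {K : Type*} [Field K]

lemma dvd_X_pow_card_pow_natDegree_sub_one [Finite K] {p : K[X]} (hp : Irreducible p)
    (hp0 : p.coeff 0 ≠ 0) : p ∣ X ^ (Nat.card K ^ p.natDegree - 1) - 1 := by
  have not_dvd_X : ¬ p ∣ X := fun h =>
    hp0 (X_dvd_iff.mp ((hp.associated_of_dvd irreducible_X h).symm.dvd))
  have dvd_X_pow_sub_X : p ∣ X ^ Nat.card K ^ p.natDegree - X :=
    hp.natDegree_dvd_iff_dvd_X_pow_card_pow_sub_X.mp dvd_rfl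
  have factorization : (X ^ Nat.card K ^ p.natDegree - X : K[X]) =
      X * (X ^ (Nat.card K ^ p.natDegree - 1) - 1) := by
    rw [mul_sub_one, mul_pow_sub_one (pow_ne_zero _ Nat.card_pos.ne')]
  exact (hp.prime.dvd_or_dvd (factorization ▸ dvd_X_pow_sub_X)).resolve_left not_dvd_X

lemma dvd_pow_natDegree_of_forall_irreducible_dvd {P Q : K[X]} (hP : P ≠ 0)
    (h : ∀ p, Irreducible p → p ∣ P → p ∣ Q) : P ∣ Q ^ P.natDegree := by
  induction P using WfDvdMonoid.induction_on_irreducible with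
  | zero => contradiction
  | unit u hu => exact hu.dvd
  | mul P p hP0 hp ih =>
    calc p * P ∣ Q ^ p.natDegree * Q ^ P.natDegree :=
          mul_dvd_mul (dvd_pow (h p hp (dvd_mul_right p P)) hp.natDegree_pos.ne')
            (ih hP0 fun r hr hrP => h r hr (hrP.mul_left p))
      _ = Q ^ (p * P).natDegree := by rw [natDegree_mul hp.ne_zero hP0, pow_add]

lemma dvd_X_pow_mul_char_pow_sub_one [Finite K] {ℓ : ℕ} [Fact ℓ.Prime] [CharP K ℓ] {P : K[X]}
    (hP0 : P.coeff 0 ≠ 0) {B γ : ℕ}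
    (hB : ∀ p, Irreducible p → p ∣ P → Nat.card K ^ p.natDegree - 1 ∣ B)
    (hγ : P.natDegree ≤ ℓ ^ γ) : P ∣ X ^ (B * ℓ ^ γ) - 1 := by
  have factor_dvd (p : K[X]) (hp : Irreducible p) (hpP : p ∣ P) : p ∣ X ^ B - 1 := by
    have hp0 : p.coeff 0 ≠ 0 := fun h => hP0 (X_dvd_iff.mp ((X_dvd_iff.mpr h).trans hpP))
    obtain ⟨c, hc⟩ := hB p hp hpP
    exact hc ▸ (dvd_X_pow_card_pow_natDegree_sub_one hp hp0).trans
      (pow_one_sub_dvd_pow_mul_sub_one X _ c)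
  have hP : P ≠ 0 := by
    rintro rfl
    exact hP0 (coeff_zero 0)
  calc P ∣ (X ^ B - 1) ^ P.natDegree := dvd_pow_natDegree_of_forall_irreducible_dvd hP factor_dvd
    _ ∣ (X ^ B - 1) ^ ℓ ^ γ := pow_dvd_pow _ hγ
    _ = X ^ (B * ℓ ^ γ) - 1 := by rw [sub_pow_char_pow, one_pow, pow_mul]

lemma apply_natDegree_dvd_prod_of_irreducible_dvd {ι : Type*} {s : Finset ι} {q : ι → K[X]}
    {e : ι → ℕ} (hq : ∀ i ∈ s, Irreducible (q i)) {p : K[X]} (hp : Irreducible p)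
    (h : p ∣ ∏ i ∈ s, q i ^ e i) (F : ℕ → ℕ) : F p.natDegree ∣ ∏ i ∈ s, F (q i).natDegree := by
  obtain ⟨i, hi, hpi⟩ := hp.prime.exists_mem_finset_dvd h
  have associated : Associated p (q i) :=
    hp.associated_of_dvd (hq i hi) (hp.prime.dvd_of_dvd_pow hpi)
  rw [natDegree_eq_of_degree_eq (degree_eq_degree_of_associated associated)]
  exact Finset.dvd_prod_of_mem (fun i => F (q i).natDegree) hi

end Field

section Lifting

variable {R : Type*} [CommRing R]

lemma mem_span_pair_iff_mk_dvd_mk {a b x : R} :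
    x ∈ Ideal.span {a, b} ↔
      Ideal.Quotient.mk (Ideal.span {b}) a ∣ Ideal.Quotient.mk (Ideal.span {b}) x := by
  rw [← Ideal.mem_span_singleton, ← Set.image_singleton, ← Ideal.map_span, ← Ideal.mem_comap,
    Ideal.comap_map_of_surjective _ Ideal.Quotient.mk_surjective, ← RingHom.ker_eq_comap_bot,
    Ideal.mk_ker, Ideal.span_insert]

lemma pow_sub_pow_mem_span_pair {p : ℕ} {b x y : R} (h : x - y ∈ Ideal.span {(p : R), b}) (k : ℕ) :
    x ^ p ^ k - y ^ p ^ k ∈ Ideal.span {(p : R) ^ (k + 1), b} := by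
  rw [mem_span_pair_iff_mk_dvd_mk] at h ⊢
  simp only [map_sub, map_pow, map_natCast] at h ⊢
  exact dvd_sub_pow_of_dvd_sub h k

lemma mem_span_C_pair_of_map_dvd_map {S : Type*} [CommRing S] {f : R →+* S}
    (hf : Function.Surjective f) {r : R} (hker : RingHom.ker f = Ideal.span {r}) {P Q : R[X]}
    (h : P.map f ∣ Q.map f) : Q ∈ Ideal.span {C r, P} := by
  have mem_comap : Q ∈ (Ideal.map (mapRingHom f) (Ideal.span {P})).comap (mapRingHom f) := by
    simpa [Ideal.map_span, Ideal.mem_span_singleton] using h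
  rwa [Ideal.comap_map_of_surjective _ (map_surjective f hf), ← RingHom.ker_eq_comap_bot,
    ker_mapRingHom, hker, Ideal.map_span, Set.image_singleton, ← Ideal.span_insert,
    Ideal.span_pair_comm] at mem_comap

lemma existsUnique_natDegree_lt_of_mem_span_C_pair {P Q : R[X]} (hP : P.Monic)
    (hdeg : P.natDegree ≠ 0) {c : R} (hc : c ∈ nonZeroDivisors R) (h : Q ∈ Ideal.span {C c, P}) :
    ∃! M : R[X], M.natDegree < P.natDegree ∧ P ∣ Q - C c * M := by
  have : Nontrivial R :=
    not_subsingleton_iff_nontrivial.mp fun _ => hdeg natDegree_of_subsingleton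
  obtain ⟨U, V, rfl⟩ := Ideal.mem_span_pair.mp h
  have hP1 : P ≠ 1 := fun h1 => hdeg (h1 ▸ natDegree_one)
  refine ⟨U %ₘ P, ⟨natDegree_modByMonic_lt U hP hP1, C c * (U /ₘ P) + V, ?_⟩, ?_⟩
  · linear_combination -C c * modByMonic_add_div U P
  · rintro M ⟨hM, hdvd⟩
    have dvd_smul_sub : P ∣ c • M - c • U := by
      rw [smul_eq_C_mul, smul_eq_C_mul]
      convert (dvd_mul_left P V).sub hdvd using 1
      ring
    have smul_eq : c • M = c • (U %ₘ P) := calc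
      c • M = (c • M) %ₘ P := ((modByMonic_eq_self_iff hP).mpr
        ((degree_smul_le c M).trans_lt (degree_lt_degree hM))).symm
      _ = (c • U) %ₘ P := modByMonic_eq_of_dvd_sub hP dvd_smul_sub
      _ = c • (U %ₘ P) := smul_modByMonic c U
    have smul_regular : IsSMulRegular R c := fun _ _ => (mul_cancel_left_mem_nonZeroDivisors hc).mp
    exact smul_regular.polynomial smul_eq

end Lifting

theorem stmt_6_general {R K : Type*} [CommRing R] [Field K] [Finite K] {ℓ : ℕ} (hℓ : ℓ.Prime)
    (hℓR : (ℓ : R) ∈ nonZeroDivisors R) {π : R →+* K} (hπ : Function.Surjective π)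
    (hker : RingHom.ker π = Ideal.span {(ℓ : R)}) {χ : R[X]} (hmonic : χ.Monic)
    (hdeg : χ.natDegree ≠ 0) (hχ0 : ¬ (ℓ : R) ∣ χ.coeff 0) {B γ k : ℕ}
    (hB : ∀ p, Irreducible p → p ∣ χ.map π → Nat.card K ^ p.natDegree - 1 ∣ B)
    (hγ : χ.natDegree ≤ ℓ ^ γ) (hk : 1 ≤ k) :
    (X ^ (B * ℓ ^ (γ + k - 1)) - 1 : R[X]) ∈ Ideal.span {C ((ℓ : R) ^ k), χ} ∧
      ∃! M : R[X], M.natDegree < χ.natDegree ∧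
        χ ∣ X ^ (B * ℓ ^ (γ + k - 1)) - 1 - C ((ℓ : R) ^ k) * M := by
  have map_eq_zero_iff (r : R) : π r = 0 ↔ (ℓ : R) ∣ r := by
    rw [← RingHom.mem_ker, hker, Ideal.mem_span_singleton]
  have : Fact ℓ.Prime := ⟨hℓ⟩
  have : CharP K ℓ := (CharP.charP_iff_prime_eq_zero hℓ).mpr <| by
    simpa using (map_eq_zero_iff ℓ).mpr dvd_rfl
  have map_dvd_map : χ.map π ∣ (X ^ (B * ℓ ^ γ) - 1 : R[X]).map π := by
    have coeff_ne_zero : (χ.map π).coeff 0 ≠ 0 := by rwa [coeff_map, Ne, map_eq_zero_iff]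
    simpa using dvd_X_pow_mul_char_pow_sub_one coeff_ne_zero hB (natDegree_map_le.trans hγ)
  have mem_span : (X ^ (B * ℓ ^ γ) - 1 : R[X]) ∈ Ideal.span {(ℓ : R[X]), χ} := by
    simpa using mem_span_C_pair_of_map_dvd_map hπ hker map_dvd_map
  have mem_span_pow :
      (X ^ (B * ℓ ^ (γ + k - 1)) - 1 : R[X]) ∈ Ideal.span {C ((ℓ : R) ^ k), χ} := by
    simpa [← pow_mul, mul_assoc, ← pow_add, Nat.sub_add_cancel hk, ← Nat.add_sub_assoc hk]
      using pow_sub_pow_mem_span_pair mem_span (k - 1)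
  exact ⟨mem_span_pow,
    existsUnique_natDegree_lt_of_mem_span_C_pair hmonic hdeg (pow_mem hℓR k) mem_span_pow⟩

/-- **Frobenius and ℓ-torsion (algebraic content).**  Let `χ ∈ ℤ[X]` be monic of degree
`2g ≥ 1` with `ℓ ∤ χ(0)`.  With `f₁,…,f_s` the degrees of the distinct monic irreducible
factors of `χ mod ℓ`, `B = ∏(ℓ^{fᵢ}−1)`, `γ` minimal with `ℓ^γ ≥ 2g`, and
`A_k = B·ℓ^{γ+k−1}`, the polynomial `X^{A_k} − 1` lies in the ideal `(ℓ^k, χ)` of `ℤ[X]`;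
more precisely there is a unique `M_k ∈ ℤ[X]` of degree `< 2g` with
`χ ∣ X^{A_k} − 1 − ℓ^k·M_k`. -/
theorem stmt_6 (ℓ k : ℕ) (hℓ : Nat.Prime ℓ) (hk : 1 ≤ k)
    (g : ℕ) (hg : 1 ≤ g)
    (χ : Polynomial ℤ) (hmonic : χ.Monic) (hdeg : χ.natDegree = 2 * g)
    (hχ0 : ¬ (ℓ : ℤ) ∣ χ.coeff 0)
    (s : ℕ) (χi : Fin s → Polynomial (ZMod ℓ)) (e f : Fin s → ℕ)
    (he : ∀ i, 1 ≤ e i)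
    (hmono : ∀ i, (χi i).Monic) (hirr : ∀ i, Irreducible (χi i))
    (hinj : Function.Injective χi)
    (hdegi : ∀ i, (χi i).natDegree = f i)
    (hfac : χ.map (Int.castRingHom (ZMod ℓ)) = ∏ i, χi i ^ e i)
    (B : ℕ) (hB : B = ∏ i, (ℓ ^ f i - 1))
    (γ : ℕ) (hγ : 2 * g ≤ ℓ ^ γ) (hγmin : ∀ δ : ℕ, 2 * g ≤ ℓ ^ δ → γ ≤ δ)
    (A : ℕ) (hA : A = B * ℓ ^ (γ + k - 1)) :
    (Polynomial.X ^ A - 1 : Polynomial ℤ) ∈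
        Ideal.span {(Polynomial.C ((ℓ : ℤ) ^ k) : Polynomial ℤ), χ} ∧
      ∃! M : Polynomial ℤ, M.natDegree < 2 * g ∧
        χ ∣ Polynomial.X ^ A - 1 - Polynomial.C ((ℓ : ℤ) ^ k) * M := by
  have : Fact ℓ.Prime := ⟨hℓ⟩
  obtain rfl : (fun i => (χi i).natDegree) = f := funext hdegi
  subst hA hB
  rw [← hdeg] at hγ ⊢
  refine stmt_6_general hℓ (by simpa using hℓ.ne_zero) (ZMod.ringHom_surjective _)
    (ZMod.ker_intCastRingHom ℓ) hmonic (by lia) hχ0 (fun p hp hdvd => ?_) hγ hk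
  rw [Nat.card_zmod]
  exact apply_natDegree_dvd_prod_of_irreducible_dvd (fun i _ => hirr i) hp (hfac ▸ hdvd)
    (ℓ ^ · - 1)
end

section
/- Let A be an abelian group and n ≥ 1 an integer such that multiplication by n is surjective on A. Let F : A → A be a group endomorphism, set G = {a ∈ A : F(a) = a}, and assume that G is finite and that every a ∈ A with n·a = 0 lies in G (i.e. A[n] ⊆ G). Then: (1) the assignment K(P) = F(R) − R, where R is any element of A with n·R = P, gives a well-defined group homomorphism K : G → A; (2) the image of K is exactly A[n] = {a ∈ A : n·a = 0} and its kernel is exactly n·G, so K induces a group isomorphism G/nG ≅ A[n]; (3) if moreover κ : A → A is a group endomorphism with n·κ = F − id, then K(P) = κ(P) for every P ∈ G. -/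
/-!
Since multiplication by `n` is surjective and `F - id` kills `A[n]`, there is an endomorphism `κ`
with `κ (n • R) = F R - R`; the Kummer map is its restriction to `G = ker (κ ∘ n)`. As `κ` and `n`
commute, `κ` maps `G` into `A[n]` with kernel `ker κ`, while `n` maps `G` onto `ker κ` with kernel
`A[n]`. Comparing the two counts of the finite group `G` gives `κ(G) = A[n]`.
-/

section Counting

variable {A B : Type*} [AddGroup A] [AddGroup B]

theorem card_ker_mul_card_map {f : A →+ B} {H : AddSubgroup A} (hle : f.ker ≤ H) :
    Nat.card f.ker * Nat.card (H.map f) = Nat.card H := by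
  rw [← AddSubgroup.relIndex_ker, ← AddSubgroup.relIndex_bot_left f.ker,
    ← AddSubgroup.relIndex_bot_left H]
  exact AddSubgroup.relIndex_mul_relIndex _ _ _ bot_le hle

theorem map_ker_comp_of_surjective {C : Type*} [AddGroup C] {f : A →+ B}
    (hf : Function.Surjective f) (g : B →+ C) : (g.comp f).ker.map f = g.ker := by
  rw [← AddMonoidHom.comap_ker, AddSubgroup.map_comap_eq_self_of_surjective hf]

theorem ker_le_ker_comp {C : Type*} [AddGroup C] (f : A →+ B) (g : B →+ C) :
    f.ker ≤ (g.comp f).ker := by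
  rw [← AddMonoidHom.comap_ker]
  exact f.ker_le_comap g.ker

theorem map_ker_comp_of_commute {f g : A →+ A} (hf : Function.Surjective f)
    (hcomm : g.comp f = f.comp g) [Finite (g.comp f).ker] : (g.comp f).ker.map g = f.ker := by
  have hg_le : g.ker ≤ (g.comp f).ker := hcomm ▸ ker_le_ker_comp g f
  have hf_le : f.ker ≤ (g.comp f).ker := ker_le_ker_comp f g
  have : Finite g.ker := .of_injective _ (AddSubgroup.inclusion_injective hg_le)
  have : Finite f.ker := .of_injective _ (AddSubgroup.inclusion_injective hf_le)
  have hmap_le : (g.comp f).ker.map g ≤ f.ker := by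
    rw [hcomm, ← AddMonoidHom.comap_ker]
    exact AddSubgroup.map_comap_le g f.ker
  have hcard : Nat.card g.ker * Nat.card ((g.comp f).ker.map g) =
      Nat.card g.ker * Nat.card f.ker := by
    calc
      _ = Nat.card (g.comp f).ker := card_ker_mul_card_map hg_le
      _ = Nat.card f.ker * Nat.card ((g.comp f).ker.map f) := (card_ker_mul_card_map hf_le).symm
      _ = Nat.card g.ker * Nat.card f.ker := by rw [map_ker_comp_of_surjective hf, mul_comm]
  exact AddSubgroup.eq_of_le_of_card_ge hmap_le
    (Nat.eq_of_mul_eq_mul_left Nat.card_pos hcard).ge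

end Counting

section DividedHom

variable {A B : Type*} {n : ℕ}

theorem apply_eq_of_nsmul_eq [AddMonoid A] [AddMonoid B] {κ : A →+ B} {D : A → B}
    (hκ : ∀ a : A, n • κ a = D a) {P R : A} (hR : n • R = P) : κ P = D R := by
  rw [← hR, map_nsmul, hκ]

theorem comp_nsmulAddMonoidHom_eq [AddCommMonoid A] [AddMonoid B] {κ D : A →+ B}
    (hκ : ∀ a : A, n • κ a = D a) :
    κ.comp (nsmulAddMonoidHom n) = D :=
  AddMonoidHom.ext fun _ => apply_eq_of_nsmul_eq hκ rfl

variable [AddCommGroup A]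

theorem exists_nsmul_apply_eq [AddGroup B] (hsurj : ∀ a : A, ∃ b : A, n • b = a) {D : A →+ B}
    (htors : ∀ a : A, n • a = 0 → D a = 0) : ∃ κ : A →+ B, ∀ a : A, n • κ a = D a := by
  let mulN : A →+ A := nsmulAddMonoidHom n
  let κ : A →+ B := mulN.liftOfSurjective hsurj ⟨D, htors⟩
  refine ⟨κ, fun a => ?_⟩
  rw [← map_nsmul]
  exact mulN.liftOfRightInverse_comp_apply _ _ ⟨D, htors⟩ a

theorem map_nsmul_ker_eq_ker [AddGroup B] (hsurj : ∀ a : A, ∃ b : A, n • b = a) {κ D : A →+ B}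
    (hκ : ∀ a : A, n • κ a = D a) : D.ker.map (nsmulAddMonoidHom n) = κ.ker := by
  rw [← comp_nsmulAddMonoidHom_eq hκ]
  exact map_ker_comp_of_surjective (f := (nsmulAddMonoidHom n : A →+ A)) hsurj κ

theorem map_ker_eq_ker_nsmul (hsurj : ∀ a : A, ∃ b : A, n • b = a) {κ D : A →+ A}
    (hκ : ∀ a : A, n • κ a = D a) [Finite D.ker] :
    D.ker.map κ = (nsmulAddMonoidHom n : A →+ A).ker := by
  obtain rfl := comp_nsmulAddMonoidHom_eq hκ
  exact map_ker_comp_of_commute hsurj (AddMonoidHom.ext (map_nsmul κ n))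

end DividedHom

/-- **The Kummer map, abstractly.**  Let `A` be an abelian group on which multiplication by
`n ≥ 1` is surjective, `F : A → A` an endomorphism with finite fixed-point group `G`, and
assume `A[n] ⊆ G`.  Then (1) `K(P) = F(R) − R` (for any `R` with `n·R = P`) is a
well-defined homomorphism `K : G → A`; (2) its image is exactly `A[n]` and its kernel is
exactly `n·G` (so `K` induces `G/nG ≅ A[n]`); (3) if `κ : A → A` is an endomorphism with
`n·κ = F − id`, then `K(P) = κ(P)` for all `P ∈ G`. -/
theorem stmt_8 {A : Type} [AddCommGroup A] (n : ℕ) (hn : 1 ≤ n)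
    (hsurj : ∀ a : A, ∃ b : A, n • b = a)
    (F : A →+ A) (G : AddSubgroup A)
    (hG : ∀ a : A, a ∈ G ↔ F a = a)
    (hGfin : (G : Set A).Finite)
    (htors : ∀ a : A, n • a = 0 → a ∈ G) :
    (∀ P : A, P ∈ G → ∀ R R' : A, n • R = P → n • R' = P → F R - R = F R' - R') ∧
      ∃ K : G →+ A,
        (∀ (P : G) (R : A), n • R = (P : A) → K P = F R - R) ∧
        (Set.range (fun P : G => K P) = {a : A | n • a = 0}) ∧
        (∀ P : G, K P = 0 ↔ ∃ Q : G, n • Q = P) ∧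
        (∀ κ : A →+ A, (∀ a : A, n • κ a = F a - a) → ∀ P : G, K P = κ (P : A)) := by
  obtain rfl : G = (F - .id A).ker := by
    ext a
    exact (hG a).trans sub_eq_zero.symm
  have : Finite (F - .id A).ker := hGfin
  obtain ⟨κ, hκ⟩ := exists_nsmul_apply_eq hsurj htors
  have hK {P R : A} : n • R = P → κ P = F R - R := apply_eq_of_nsmul_eq hκ
  refine ⟨fun P _ R R' hR hR' => (hK hR).symm.trans (hK hR'), κ.comp (AddSubgroup.subtype _),
    fun P R => hK, ?range, fun P => ?ker, fun κ' hκ' P => ?unique⟩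
  case range =>
    exact (Set.image_eq_range κ _).symm.trans (congrArg SetLike.coe (map_ker_eq_ker_nsmul hsurj hκ))
  case ker =>
    rw [AddMonoidHom.comp_apply, ← AddMonoidHom.mem_ker, ← map_nsmul_ker_eq_ker hsurj hκ]
    simp [Subtype.ext_iff]
  case unique =>
    obtain ⟨R, hR⟩ := hsurj P
    exact (hK hR).trans (apply_eq_of_nsmul_eq hκ' hR).symm
end

section
/- Let P and Q be two nonconstant polynomials with integer coefficients whose greatest common divisor in ℤ[X] is trivial (every common divisor is a unit). Let N ≥ 2 be an integer, and suppose there exists a monic polynomial A ∈ ℤ[X] of degree d ≥ 1 and polynomials U, V ∈ ℤ[X] such that P ≡ A·U (mod N) and Q ≡ A·V (mod N) (congruence of all coefficients modulo N). Then N^d divides the resultant Res(P, Q) of P and Q. -/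
/-- The Sylvester matrix of two integer polynomials `P` and `Q`: a square matrix of size
`deg P + deg Q` whose first `deg Q` rows are the shifted coefficient vectors of `P` and
whose last `deg P` rows are the shifted coefficient vectors of `Q`. -/
noncomputable def sylvester (P Q : Polynomial ℤ) :
    Matrix (Fin (P.natDegree + Q.natDegree)) (Fin (P.natDegree + Q.natDegree)) ℤ :=
  Matrix.of fun i j =>
    if (i : ℕ) < Q.natDegree then
      if (i : ℕ) ≤ (j : ℕ) ∧ (j : ℕ) - (i : ℕ) ≤ P.natDegree then
        P.coeff (P.natDegree - ((j : ℕ) - (i : ℕ)))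
      else 0
    else
      if (i : ℕ) - Q.natDegree ≤ (j : ℕ) ∧
          (j : ℕ) - ((i : ℕ) - Q.natDegree) ≤ Q.natDegree then
        Q.coeff (Q.natDegree - ((j : ℕ) - ((i : ℕ) - Q.natDegree)))
      else 0

/-- The resultant of two integer polynomials, as the determinant of their Sylvester
matrix. -/
noncomputable def resultant (P Q : Polynomial ℤ) : ℤ :=
  (sylvester P Q).det

/-!
Reduction modulo the monic polynomial `A` of degree `d`, written on coefficient vectors of length
`n ≥ d` and completed by the identity on the coefficients from `d` on, is a unitriangular matrix.
Multiplying the transposed Sylvester matrix by it keeps the determinant. The columns of that matrix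
are the polynomials `X ^ j * P` and `X ^ j * Q`, whose remainders modulo `A` are divisible by `N`,
so that the product has `d` rows divisible by `N`. Moreover `d ≤ deg P + deg Q`, as otherwise `P`
and `Q` would be their own remainders and so have the common factor `N`.
-/

section

open Polynomial

variable {R : Type*} [CommRing R] {a : R} {A : R[X]} {m n : ℕ}

theorem pow_card_dvd_det_of_forall_dvd {ι : Type*} [Fintype ι] [DecidableEq ι]
    {M : Matrix ι ι R} {s : Finset ι} (h : ∀ i ∈ s, ∀ j, a ∣ M i j) : a ^ s.card ∣ M.det := by
  rw [Matrix.det_apply]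
  refine Finset.dvd_sum fun σ _ ↦ dvd_smul_of_dvd _ ?_
  rw [← Equiv.prod_comp σ⁻¹]
  calc a ^ s.card = ∏ _i ∈ s, a := (Finset.prod_const a).symm
    _ ∣ ∏ i ∈ s, M (σ (σ⁻¹ i)) (σ⁻¹ i) :=
      Finset.prod_dvd_prod_of_dvd _ _ fun i hi ↦ by simpa using h i hi _
    _ ∣ ∏ i, M (σ (σ⁻¹ i)) (σ⁻¹ i) := Finset.prod_dvd_prod_of_subset _ _ _ s.subset_univ

theorem X_pow_modByMonic_of_lt_natDegree (hA : A.Monic) {i : ℕ} (hi : i < A.natDegree) :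
    X ^ i %ₘ A = X ^ i := by
  nontriviality R
  rw [modByMonic_eq_self_iff hA]
  exact degree_lt_degree (by simpa using hi)

/-- The endomorphism of the polynomials `F` of degree less than `n`, on coefficient vectors, that
replaces the coefficients of `F` below `A.natDegree` by those of `F %ₘ A` and keeps the others.
Keeping them makes the matrix square and, for monic `A`, unitriangular. -/
noncomputable def remainderMatrix (A : R[X]) (n : ℕ) : Matrix (Fin n) (Fin n) R :=
  Matrix.of fun k i ↦
    if (k : ℕ) < A.natDegree then (X ^ (i : ℕ) %ₘ A).coeff k else (1 : Matrix _ _ R) k i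

theorem remainderMatrix_apply_of_le (hA : A.Monic) {k i : Fin n} (hik : i ≤ k) :
    remainderMatrix A n k i = (1 : Matrix _ _ R) k i := by
  rw [remainderMatrix, Matrix.of_apply, ite_eq_right_iff]
  intro hk
  rw [X_pow_modByMonic_of_lt_natDegree hA (lt_of_le_of_lt hik hk), coeff_X_pow, Matrix.one_apply]
  simp only [Fin.ext_iff]

theorem det_remainderMatrix (hA : A.Monic) : (remainderMatrix A n).det = 1 := by
  rw [Matrix.det_of_isUpperTriangular]
  · exact Finset.prod_eq_one fun k _ ↦ by
      rw [remainderMatrix_apply_of_le hA le_rfl, Matrix.one_apply_eq]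
  · intro k i hik
    have hlt : i < k := hik
    rw [remainderMatrix_apply_of_le hA hlt.le, Matrix.one_apply_ne hlt.ne']

theorem sum_coeff_X_pow_modByMonic_mul_coeff {F : R[X]} (hF : F.natDegree < n) (A : R[X]) (k : ℕ) :
    ∑ i : Fin n, (X ^ (i : ℕ) %ₘ A).coeff k * F.coeff i = (F %ₘ A).coeff k := by
  calc ∑ i : Fin n, (X ^ (i : ℕ) %ₘ A).coeff k * F.coeff i
      = (modByMonicHom A (∑ i ∈ Finset.range n, F.coeff i • X ^ i)).coeff k := by
        rw [Fin.sum_univ_eq_sum_range fun i ↦ (X ^ i %ₘ A).coeff k * F.coeff i]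
        simp only [map_sum, map_smul, modByMonicHom_apply, finsetSum_coeff, coeff_smul,
          smul_eq_mul, mul_comm]
    _ = (F %ₘ A).coeff k := by
        simp only [smul_eq_C_mul, ← F.as_sum_range_C_mul_X_pow' hF, modByMonicHom_apply]

theorem pow_natDegree_dvd_det_coeff (hA : A.Monic) (hn : A.natDegree ≤ n) {F : Fin n → R[X]}
    (hdeg : ∀ j, (F j).natDegree < n) (hF : ∀ j, C a ∣ F j %ₘ A) :
    a ^ A.natDegree ∣ (Matrix.of fun i j ↦ (F j).coeff (i : ℕ) : Matrix (Fin n) (Fin n) R).det := by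
  set M : Matrix (Fin n) (Fin n) R := Matrix.of fun i j ↦ (F j).coeff (i : ℕ)
  have hrows : ∀ k ∈ Finset.univ.map (Fin.castLEEmb hn), ∀ j,
      a ∣ (remainderMatrix A n * M) k j := by
    simp only [Finset.mem_map, Finset.mem_univ, true_and, forall_exists_index,
      forall_apply_eq_imp_iff]
    intro k j
    have hentry : (remainderMatrix A n * M) (Fin.castLEEmb hn k) j = (F j %ₘ A).coeff k := by
      simp [Matrix.mul_apply, remainderMatrix, M, sum_coeff_X_pow_modByMonic_mul_coeff (hdeg j)]
    rw [hentry]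
    exact (C_dvd_iff_dvd_coeff _ _).1 (hF j) k
  simpa [det_remainderMatrix hA] using pow_card_dvd_det_of_forall_dvd hrows

theorem C_dvd_mul_modByMonic (hA : A.Monic) {F W : R[X]} (h : C a ∣ F - A * W) (G : R[X]) :
    C a ∣ (G * F) %ₘ A := by
  obtain ⟨S, hS⟩ := h
  have hGF : G * F = a • (G * S) + A * (G * W) := by
    rw [smul_eq_C_mul]
    linear_combination G * hS
  refine ⟨(G * S) %ₘ A, ?_⟩
  rw [hGF, add_modByMonic, smul_modByMonic, smul_eq_C_mul,
    (modByMonic_eq_zero_iff_dvd hA).2 (dvd_mul_right _ _), add_zero]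

theorem C_dvd_of_natDegree_lt (hA : A.Monic) {F W : R[X]} (hF : F.natDegree < A.natDegree)
    (h : C a ∣ F - A * W) : C a ∣ F := by
  nontriviality R
  have hmod := C_dvd_mul_modByMonic hA h 1
  rwa [one_mul, (modByMonic_eq_self_iff hA).2 (degree_lt_degree hF)] at hmod

/-- The polynomial whose coefficients, from degree `0` on, form the `j`-th column of Mathlib's
Sylvester matrix, in which the multiples of `Q` precede those of `P`. -/
noncomputable def sylvesterColumn (P Q : R[X]) (j : Fin (m + n)) : R[X] :=
  j.addCases (fun j : Fin m ↦ X ^ (j : ℕ) * Q) fun j : Fin n ↦ X ^ (j : ℕ) * P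

theorem ite_mem_Icc_coeff_sub {F : R[X]} (hF : F.natDegree ≤ n) (i j : ℕ) :
    (if i ∈ Set.Icc j (j + n) then F.coeff (i - j) else 0) = (X ^ j * F).coeff i := by
  rw [coeff_X_pow_mul']
  by_cases hi : i ≤ j + n
  · simp [hi]
  · simp [hi, coeff_eq_zero_of_natDegree_lt (show F.natDegree < i - j by lia)]

variable {P Q U V : R[X]}

theorem polynomial_sylvester_eq_coeff_sylvesterColumn (hP : P.natDegree ≤ m)
    (hQ : Q.natDegree ≤ n) :
    Polynomial.sylvester P Q m n =
      Matrix.of fun i j : Fin (m + n) ↦ (sylvesterColumn P Q j).coeff (i : ℕ) := by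
  ext i j
  induction j using Fin.addCases with
  | left j => simp [Polynomial.sylvester, sylvesterColumn, ← ite_mem_Icc_coeff_sub hQ]
  | right j => simp [Polynomial.sylvester, sylvesterColumn, ← ite_mem_Icc_coeff_sub hP]

theorem natDegree_sylvesterColumn_lt (hP : P.natDegree ≤ m) (hQ : Q.natDegree ≤ n)
    (j : Fin (m + n)) : (sylvesterColumn P Q j).natDegree < m + n := by
  induction j using Fin.addCases with
  | left j =>
    rw [sylvesterColumn, Fin.addCases_left]
    exact natDegree_mul_le.trans_lt (by grw [natDegree_X_pow_le]; lia)
  | right j =>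
    rw [sylvesterColumn, Fin.addCases_right]
    exact natDegree_mul_le.trans_lt (by grw [natDegree_X_pow_le]; lia)

theorem C_dvd_sylvesterColumn_modByMonic (hA : A.Monic) (hPU : C a ∣ P - A * U)
    (hQV : C a ∣ Q - A * V) (j : Fin (m + n)) : C a ∣ sylvesterColumn P Q j %ₘ A := by
  induction j using Fin.addCases with
  | left j => simpa [sylvesterColumn] using C_dvd_mul_modByMonic hA hQV _
  | right j => simpa [sylvesterColumn] using C_dvd_mul_modByMonic hA hPU _

theorem natDegree_le_max_of_isRelPrime (hA : A.Monic) (hPQ : IsRelPrime P Q) (ha : ¬IsUnit a)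
    (hPU : C a ∣ P - A * U) (hQV : C a ∣ Q - A * V) :
    A.natDegree ≤ max P.natDegree Q.natDegree := by
  contrapose! ha
  obtain ⟨hPlt, hQlt⟩ := max_lt_iff.1 ha
  exact isUnit_C.1 <| hPQ (C_dvd_of_natDegree_lt hA hPlt hPU) (C_dvd_of_natDegree_lt hA hQlt hQV)

theorem stmt_10_general (hA : A.Monic) (hP : P.natDegree ≤ m) (hQ : Q.natDegree ≤ n)
    (hmn : A.natDegree ≤ m + n) (hPU : C a ∣ P - A * U) (hQV : C a ∣ Q - A * V) :
    a ^ A.natDegree ∣ Polynomial.resultant P Q m n := by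
  rw [Polynomial.resultant, polynomial_sylvester_eq_coeff_sylvesterColumn hP hQ]
  exact pow_natDegree_dvd_det_coeff hA hmn (natDegree_sylvesterColumn_lt hP hQ)
    (C_dvd_sylvesterColumn_modByMonic hA hPU hQV)

end

theorem sylvester_eq_transpose_submatrix_rev (P Q : Polynomial ℤ) :
    sylvester P Q = (P.sylvester Q P.natDegree Q.natDegree).transpose.submatrix
      Fin.revPerm Fin.revPerm := by
  ext i j
  simp only [sylvester, Polynomial.sylvester, Matrix.of_apply, Matrix.submatrix_apply,
    Matrix.transpose_apply, Fin.addCases, Fin.revPerm_apply, Fin.val_rev, Set.mem_Icc]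
  split_ifs <;> grind

theorem resultant_eq_polynomial_resultant (P Q : Polynomial ℤ) :
    resultant P Q = P.resultant Q := by
  rw [resultant, sylvester_eq_transpose_submatrix_rev, Matrix.det_submatrix_equiv_self,
    Matrix.det_transpose, Polynomial.resultant]

theorem C_natCast_dvd_iff_map_intCast_zmod_eq_zero {N : ℕ} {F : Polynomial ℤ} :
    Polynomial.C (N : ℤ) ∣ F ↔ F.map (Int.castRingHom (ZMod N)) = 0 := by
  rw [Polynomial.C_dvd_iff_dvd_coeff, Polynomial.ext_iff]
  simp only [Polynomial.coeff_map, eq_intCast, Polynomial.coeff_zero,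
    ZMod.intCast_zmod_eq_zero_iff_dvd]

/-- **Resultant and intersections.**  Let `P, Q ∈ ℤ[X]` be nonconstant with trivial gcd in
`ℤ[X]`.  If, modulo `N ≥ 2`, both `P` and `Q` are multiples of the same monic polynomial
`A` of degree `d ≥ 1`, then `N^d` divides `Res(P, Q)`. -/
theorem stmt_10 (P Q : Polynomial ℤ)
    (hP : 0 < P.natDegree) (hQ : 0 < Q.natDegree)
    (hgcd : ∀ r : Polynomial ℤ, r ∣ P → r ∣ Q → IsUnit r)
    (N : ℕ) (hN : 2 ≤ N)
    (d : ℕ) (hd : 1 ≤ d)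
    (A : Polynomial ℤ) (hA : A.Monic) (hAdeg : A.natDegree = d)
    (U V : Polynomial ℤ)
    (hPU : (P - A * U).map (Int.castRingHom (ZMod N)) = 0)
    (hQV : (Q - A * V).map (Int.castRingHom (ZMod N)) = 0) :
    (N : ℤ) ^ d ∣ resultant P Q := by
  rw [← C_natCast_dvd_iff_map_intCast_zmod_eq_zero] at hPU hQV
  have hNunit : ¬IsUnit (N : ℤ) := by rw [Int.isUnit_iff]; lia
  have hdeg := natDegree_le_max_of_isRelPrime hA (fun r ↦ hgcd r) hNunit hPU hQV
  rw [resultant_eq_polynomial_resultant, ← hAdeg]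
  exact stmt_10_general hA le_rfl le_rfl (by lia) hPU hQV
end

section
/- Let τ be an integer-valued function on the prime numbers satisfying the Deligne bound τ(p)² < 4p^{11} for every prime p. Call a pair of primes (ℓ, p) bad if ℓ divides τ(p)² − 4p^{11}, and good otherwise; for a real c > 1, call a prime ℓ c-good if (ℓ, p) is good for at least half of the primes p ≤ ℓ^c. Let α, β, γ be positive real constants such that α·k·log k ≤ p_k ≤ β·k·log k for every integer k ≥ 2 (p_k denoting the k-th prime) and π(x) ≥ γ·x/log x for every real x ≥ 2 (π the prime-counting function). Then for every integer X ≥ 816² · c⁴ · (c+1)^{2(c+2)} · (2β/α)^{2c} · γ^{−2}, at least half of the first X primes are c-good (i.e. #{k : 1 ≤ k ≤ X and p_k is c-good} ≥ X/2). -/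
/-- A pair of primes `(ℓ, p)` is *bad* (for the function `τ`) if `ℓ` divides
`τ(p)² − 4p¹¹`. -/
def BadPair (τ : ℕ → ℤ) (ℓ p : ℕ) : Prop :=
  (ℓ : ℤ) ∣ τ p ^ 2 - 4 * (p : ℤ) ^ 11

/-- A prime `ℓ` is *c-good* if `(ℓ, p)` is good for at least half of the primes
`p ≤ ℓ^c`. -/
def CGood (τ : ℕ → ℤ) (c : ℝ) (ℓ : ℕ) : Prop :=
  Nat.card {p : ℕ // p.Prime ∧ (p : ℝ) ≤ (ℓ : ℝ) ^ c} ≤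
    2 * Nat.card {p : ℕ // p.Prime ∧ (p : ℝ) ≤ (ℓ : ℝ) ^ c ∧ ¬ BadPair τ ℓ p}

/-!
Count the pairs `(ℓ, p)` with `ℓ` a prime that is not `c`-good, `p_m ≤ ℓ ≤ p_X` for `m ≈ X / 4`,
and `p ≤ p_X ^ c` a prime for which `(ℓ, p)` is bad. Each `ℓ` lies in at least `π(p_m ^ c) / 2`
such pairs. Each `p` lies in few, because a nonzero integer of absolute value at most `p ^ 13` has
at most `13 log p / log p_m` prime divisors `ℓ ≥ p_m`. By the Chebyshev bounds `p_X / p_m` is at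
most `8 β / α`, so there are only `O(log X)` such `ℓ`, which is below `X / 4` once `X` is large.
Even if all of the first `X / 4` primes fail to be `c`-good, half of the first `X` remain.
-/

open Finset
open Real (log)
open scoped Nat.Prime

section PrimeDivisors

theorem card_mul_log_le_log_abs_of_prime_dvd {S : Finset ℕ} {a : ℝ} {D : ℤ} (ha : 0 < a)
    (hprime : ∀ ℓ ∈ S, ℓ.Prime) (hle : ∀ ℓ ∈ S, a ≤ ℓ) (hdvd : ∀ ℓ ∈ S, (ℓ : ℤ) ∣ D)
    (hD : D ≠ 0) : #S * log a ≤ log |(D : ℝ)| := by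
  have hprod_dvd : ∏ ℓ ∈ S, ℓ ∣ D.natAbs :=
    prod_primes_dvd _ (fun ℓ hℓ => (hprime ℓ hℓ).prime) fun ℓ hℓ => Int.natCast_dvd.1 (hdvd ℓ hℓ)
  have hprod_le : ∏ ℓ ∈ S, ℓ ≤ D.natAbs := Nat.le_of_dvd (Int.natAbs_pos.2 hD) hprod_dvd
  have hpow : a ^ #S ≤ |(D : ℝ)| := calc
    a ^ #S = ∏ _ℓ ∈ S, a := (prod_const a).symm
    _ ≤ ∏ ℓ ∈ S, (ℓ : ℝ) := prod_le_prod (fun _ _ => ha.le) hle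
    _ ≤ D.natAbs := by rw [← Nat.cast_prod]; exact Nat.cast_le.2 hprod_le
    _ = |(D : ℝ)| := by rw [Nat.cast_natAbs, Int.cast_abs]
  simpa only [Real.log_pow] using Real.log_le_log (pow_pos ha _) hpow

theorem card_mul_mul_log_le_of_le_card_dvd {ι : Type*} {S : Finset ℕ} {T : Finset ι} {D : ι → ℤ}
    {a N C : ℝ} (ha : 1 < a) (hprime : ∀ ℓ ∈ S, ℓ.Prime) (hle : ∀ ℓ ∈ S, a ≤ ℓ)
    (hD : ∀ p ∈ T, D p ≠ 0) (hC : ∀ p ∈ T, log |(D p : ℝ)| ≤ C)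
    (hN : ∀ ℓ ∈ S, N ≤ #{p ∈ T | (ℓ : ℤ) ∣ D p}) : #S * N * log a ≤ #T * C := by
  have hlog : 0 < log a := Real.log_pos ha
  have hbelow : ∀ p ∈ T, (#{ℓ ∈ S | ((ℓ : ℕ) : ℤ) ∣ D p} : ℝ) ≤ C / log a := fun p hp => by
    rw [le_div_iff₀ hlog]
    refine (card_mul_log_le_log_abs_of_prime_dvd (by linarith) ?_ ?_ ?_ (hD p hp)).trans (hC p hp)
    · exact fun ℓ hℓ => hprime ℓ (mem_filter.1 hℓ).1
    · exact fun ℓ hℓ => hle ℓ (mem_filter.1 hℓ).1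
    · exact fun ℓ hℓ => (mem_filter.1 hℓ).2
  have hcount : (#S : ℝ) * N ≤ #T * (C / log a) := by
    simpa only [nsmul_eq_mul] using
      card_nsmul_le_card_nsmul (fun (ℓ : ℕ) p => (ℓ : ℤ) ∣ D p) hN hbelow
  rwa [← mul_div_assoc, le_div_iff₀ hlog] at hcount

end PrimeDivisors

section PrimesUpToRealBound

theorem mem_primesLE_floor {x : ℝ} {p : ℕ} : p ∈ Nat.primesLE ⌊x⌋₊ ↔ p.Prime ∧ (p : ℝ) ≤ x := by
  rw [Nat.mem_primesLE, and_comm]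
  exact and_congr_right fun hp => Nat.le_floor_iff' hp.ne_zero

theorem natCard_prime_le_eq_primeCounting (x : ℝ) :
    Nat.card {p : ℕ // p.Prime ∧ (p : ℝ) ≤ x} = π ⌊x⌋₊ := by
  rw [Nat.subtype_card _ fun _ => mem_primesLE_floor, Nat.primesLE_card_eq_primeCounting]

theorem primeCounting_le_self (n : ℕ) : π n ≤ n := by
  rw [← Nat.primesLE_card_eq_primeCounting, Nat.primesLE_eq_filter_Ioc_zero]
  simpa only [Nat.card_Ioc, Nat.sub_zero] using card_filter_le (Ioc 0 n) Nat.Prime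

theorem primeCounting_floor_le {x : ℝ} (hx : 0 ≤ x) : (π ⌊x⌋₊ : ℝ) ≤ x :=
  (Nat.cast_le.2 (primeCounting_le_self _)).trans (Nat.floor_le hx)

end PrimesUpToRealBound

section BadPairs

variable {τ : ℕ → ℤ} {c : ℝ}

instance BadPair.decidable (τ : ℕ → ℤ) (ℓ p : ℕ) : Decidable (BadPair τ ℓ p) :=
  inferInstanceAs (Decidable (_ ∣ _))

theorem log_abs_sq_sub_four_mul_pow_le {t : ℤ} {p : ℕ} (hp : 2 ≤ p)
    (ht : t ^ 2 < 4 * (p : ℤ) ^ 11) :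
    log |((t ^ 2 - 4 * (p : ℤ) ^ 11 : ℤ) : ℝ)| ≤ 13 * log p := by
  have hp' : (2 : ℤ) ≤ p := mod_cast hp
  have habs : |t ^ 2 - 4 * (p : ℤ) ^ 11| ≤ (p : ℤ) ^ 13 := calc
    |t ^ 2 - 4 * (p : ℤ) ^ 11| ≤ 4 * (p : ℤ) ^ 11 := by
      rw [abs_of_neg (sub_neg.2 ht)]
      linarith [sq_nonneg t]
    _ ≤ (p : ℤ) ^ 2 * (p : ℤ) ^ 11 := by gcongr; nlinarith [hp']
    _ = (p : ℤ) ^ 13 := by ring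
  calc log |((t ^ 2 - 4 * (p : ℤ) ^ 11 : ℤ) : ℝ)| ≤ log ((p : ℝ) ^ 13) :=
        Real.log_le_log (abs_pos.2 (Int.cast_ne_zero.2 (sub_neg.2 ht).ne)) (mod_cast habs)
    _ = 13 * log p := by rw [Real.log_pow]; norm_num

theorem primeCounting_lt_two_mul_card_badPair_of_not_cGood {ℓ : ℕ} (h : ¬ CGood τ c ℓ) :
    π ⌊(ℓ : ℝ) ^ c⌋₊ < 2 * #{p ∈ Nat.primesLE ⌊(ℓ : ℝ) ^ c⌋₊ | BadPair τ ℓ p} := by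
  have hgood : Nat.card {p : ℕ // p.Prime ∧ (p : ℝ) ≤ (ℓ : ℝ) ^ c ∧ ¬ BadPair τ ℓ p} =
      #{p ∈ Nat.primesLE ⌊(ℓ : ℝ) ^ c⌋₊ | ¬ BadPair τ ℓ p} :=
    Nat.subtype_card _ fun p => by rw [mem_filter, mem_primesLE_floor, and_assoc]
  rw [CGood, natCard_prime_le_eq_primeCounting, hgood] at h
  have hsplit := card_filter_add_card_filter_not (s := Nat.primesLE ⌊(ℓ : ℝ) ^ c⌋₊)
    fun p => BadPair τ ℓ p
  rw [Nat.primesLE_card_eq_primeCounting] at hsplit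
  omega

variable {S : Finset ℕ} {a b γ : ℝ}

theorem card_mul_primeCounting_mul_log_le_of_not_cGood
    (hτ : ∀ p : ℕ, p.Prime → τ p ^ 2 < 4 * (p : ℤ) ^ 11) (hc : 0 ≤ c) (ha : 1 < a) (hb : 0 < b)
    (hprime : ∀ ℓ ∈ S, ℓ.Prime) (hmem : ∀ ℓ ∈ S, (ℓ : ℝ) ∈ Set.Icc a b)
    (hbad : ∀ ℓ ∈ S, ¬ CGood τ c ℓ) :
    #S * (π ⌊a ^ c⌋₊ / 2) * log a ≤ π ⌊b ^ c⌋₊ * (13 * (c * log b)) := by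
  rw [← Nat.primesLE_card_eq_primeCounting ⌊b ^ c⌋₊]
  refine card_mul_mul_log_le_of_le_card_dvd (D := fun p => τ p ^ 2 - 4 * (p : ℤ) ^ 11) ha hprime
    (fun ℓ hℓ => (hmem ℓ hℓ).1) (fun p hp => ?_) (fun p hp => ?_) (fun ℓ hℓ => ?_)
  · exact (sub_neg.2 (hτ p (mem_primesLE_floor.1 hp).1)).ne
  · obtain ⟨hp, hpb⟩ := mem_primesLE_floor.1 hp
    refine (log_abs_sq_sub_four_mul_pow_le hp.two_le (hτ p hp)).trans ?_
    rw [← Real.log_rpow hb]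
    have hp0 : (0 : ℝ) < p := Nat.cast_pos.2 hp.pos
    gcongr
  · obtain ⟨haℓ, hℓb⟩ := hmem ℓ hℓ
    have hpi_mono : π ⌊a ^ c⌋₊ ≤ π ⌊(ℓ : ℝ) ^ c⌋₊ :=
      Nat.monotone_primeCounting (by gcongr)
    have hbad_mono : #{p ∈ Nat.primesLE ⌊(ℓ : ℝ) ^ c⌋₊ | BadPair τ ℓ p} ≤
        #{p ∈ Nat.primesLE ⌊b ^ c⌋₊ | BadPair τ ℓ p} :=
      card_le_card (filter_subset_filter _ (Nat.primesLE_mono (by gcongr)))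
    have hhalf := primeCounting_lt_two_mul_card_badPair_of_not_cGood (hbad ℓ hℓ)
    have hcast : (π ⌊a ^ c⌋₊ : ℝ) ≤ 2 * #{p ∈ Nat.primesLE ⌊b ^ c⌋₊ | BadPair τ ℓ p} := by
      norm_cast
      omega
    exact (div_le_iff₀' two_pos).2 hcast

theorem card_mul_le_of_not_cGood
    (hτ : ∀ p : ℕ, p.Prime → τ p ^ 2 < 4 * (p : ℤ) ^ 11) (hc : 1 ≤ c)
    (hpi : ∀ x : ℝ, 2 ≤ x → γ * x / log x ≤ π ⌊x⌋₊) {K : ℝ} (ha : 2 ≤ a) (hb : 1 ≤ b)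
    (hba : b ≤ K * a) (hprime : ∀ ℓ ∈ S, ℓ.Prime) (hmem : ∀ ℓ ∈ S, (ℓ : ℝ) ∈ Set.Icc a b)
    (hbad : ∀ ℓ ∈ S, ¬ CGood τ c ℓ) :
    #S * γ ≤ 26 * c ^ 2 * K ^ c * log b := by
  have hc0 : 0 < c := by linarith
  have ha0 : 0 < a := by linarith
  have hK : 0 ≤ K := nonneg_of_mul_nonneg_left (by linarith) ha0
  have hloga : 0 < log a := Real.log_pos (by linarith)
  have hlogb : 0 ≤ log b := Real.log_nonneg hb
  have hlower : γ * a ^ c / c ≤ π ⌊a ^ c⌋₊ * log a := by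
    have h := hpi (a ^ c) (ha.trans (Real.self_le_rpow_of_one_le (by linarith) hc))
    rw [Real.log_rpow ha0, ← div_div] at h
    exact (div_le_iff₀ hloga).1 h
  have hupper : (π ⌊b ^ c⌋₊ : ℝ) ≤ K ^ c * a ^ c := calc
    (π ⌊b ^ c⌋₊ : ℝ) ≤ b ^ c := primeCounting_floor_le (by positivity)
    _ ≤ (K * a) ^ c := by gcongr
    _ = K ^ c * a ^ c := Real.mul_rpow hK ha0.le
  have hcount := card_mul_primeCounting_mul_log_le_of_not_cGood hτ hc0.le (by linarith)
    (by linarith) hprime hmem hbad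
  refine le_of_mul_le_mul_right ?_ (Real.rpow_pos_of_pos ha0 c)
  calc #S * γ * a ^ c = 2 * c * (#S * (γ * a ^ c / c / 2)) := by field_simp
    _ ≤ 2 * c * (#S * (π ⌊a ^ c⌋₊ * log a / 2)) := by gcongr
    _ = 2 * c * (#S * (π ⌊a ^ c⌋₊ / 2) * log a) := by ring
    _ ≤ 2 * c * (π ⌊b ^ c⌋₊ * (13 * (c * log b))) := by gcongr
    _ ≤ 2 * c * (K ^ c * a ^ c * (13 * (c * log b))) := by gcongr
    _ = 26 * c ^ 2 * K ^ c * log b * a ^ c := by ring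

end BadPairs

section ChebyshevConstants

variable {α β γ : ℝ}

theorem le_five_halves_of_mul_log_le_nth_prime
    (hlow : ∀ k : ℕ, 2 ≤ k → α * k * log k ≤ (Nat.nth Nat.Prime (k - 1) : ℝ)) : α ≤ 5 / 2 := by
  have h := hlow 2 le_rfl
  rw [Nat.nth_prime_one_eq_three] at h
  push_cast at h
  nlinarith [Real.log_two_gt_d9]

theorem le_of_mul_log_le_nth_prime_le_mul_log
    (hlow : ∀ k : ℕ, 2 ≤ k → α * k * log k ≤ (Nat.nth Nat.Prime (k - 1) : ℝ))
    (hup : ∀ k : ℕ, 2 ≤ k → (Nat.nth Nat.Prime (k - 1) : ℝ) ≤ β * k * log k) : α ≤ β := by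
  have h := (hlow 2 le_rfl).trans (hup 2 le_rfl)
  push_cast at h
  exact le_of_mul_le_mul_right (by linarith) (by positivity : 0 < 2 * log 2)

theorem le_one_of_mul_div_log_le_primeCounting
    (hpi : ∀ x : ℝ, 2 ≤ x → γ * x / log x ≤ π ⌊x⌋₊) : γ ≤ 1 := by
  have hpi_two : π 2 = 1 := by decide
  have h := hpi 2 le_rfl
  rw [Nat.floor_ofNat, hpi_two, div_le_iff₀ (by positivity)] at h
  push_cast at h
  linarith [Real.log_two_lt_d9]

end ChebyshevConstants

section Estimates

theorem log_le_two_mul_sqrt {x : ℝ} (hx : 0 ≤ x) : log x ≤ 2 * √x := by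
  have h := Real.log_le_rpow_div hx one_half_pos
  rw [← Real.sqrt_eq_rpow] at h
  linarith

theorem four_rpow_le_add_one_rpow_add_two {c : ℝ} (hc : 1 ≤ c) :
    (4 : ℝ) ^ c ≤ (c + 1) ^ (c + 2) := by
  have hbernoulli : (4 : ℝ) ^ (c / (c + 2)) ≤ c + 1 := calc
    (4 : ℝ) ^ (c / (c + 2)) = (1 + 3) ^ (c / (c + 2)) := by norm_num
    _ ≤ 1 + c / (c + 2) * 3 := rpow_one_add_le_one_add_mul_self (by norm_num) (by positivity)
      (div_le_one_of_le₀ (by linarith) (by linarith))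
    _ ≤ c + 1 := by
      rw [div_mul_eq_mul_div, add_comm, add_le_add_iff_right, div_le_iff₀ (by linarith)]
      nlinarith
  calc (4 : ℝ) ^ c = (4 ^ (c / (c + 2))) ^ (c + 2) := by
        rw [← Real.rpow_mul (by norm_num), div_mul_cancel₀ c (by linarith)]
    _ ≤ (c + 1) ^ (c + 2) := by gcongr

variable {c α β γ : ℝ}

theorem mul_eight_mul_div_rpow_le_mul_sqrt {X : ℝ} (hc : 1 ≤ c) (hα : 0 < α) (hβ : 0 < β)
    (hγ : 0 < γ)
    (hX : 816 ^ 2 * c ^ 4 * (c + 1) ^ (2 * (c + 2)) * (2 * β / α) ^ (2 * c) / γ ^ 2 ≤ X) :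
    816 * c ^ 2 * (8 * β / α) ^ c ≤ γ * √X := by
  have hsq : (816 * c ^ 2 * (c + 1) ^ (c + 2) * (2 * β / α) ^ c / γ) ^ 2 ≤ X := by
    rw [mul_comm 2 (c + 2), mul_comm 2 c, Real.rpow_mul (by linarith),
      Real.rpow_mul (by positivity), Real.rpow_two, Real.rpow_two] at hX
    convert! hX using 1
    ring
  have hroot := Real.le_sqrt_of_sq_le hsq
  rw [div_le_iff₀' hγ] at hroot
  calc 816 * c ^ 2 * (8 * β / α) ^ c = 816 * c ^ 2 * 4 ^ c * (2 * β / α) ^ c := by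
        rw [mul_assoc _ (_ ^ c), ← Real.mul_rpow (by norm_num) (by positivity)]
        ring_nf
    _ ≤ 816 * c ^ 2 * (c + 1) ^ (c + 2) * (2 * β / α) ^ c := by
        gcongr
        exact four_rpow_le_add_one_rpow_add_two hc
    _ ≤ γ * √X := hroot

theorem mul_le_of_mul_sq_mul_rpow_le_mul {K s M : ℝ} (hM : 0 ≤ M) (hc : 1 ≤ c) (hK : 1 ≤ K)
    (hs : 0 ≤ s) (hγ : γ ≤ 1) (h : M * c ^ 2 * K ^ c ≤ γ * s) : M * K ≤ s := calc
  M * K = M * 1 ^ 2 * K := by ring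
  _ ≤ M * c ^ 2 * K ^ c := by
      gcongr
      exact Real.self_le_rpow_of_one_le hK hc
  _ ≤ γ * s := h
  _ ≤ s := mul_le_of_le_one_left hs hγ

theorem le_eight_mul_div_mul_of_chebyshev {m n a b : ℝ} (hα : 0 < α) (hβ : 0 ≤ β) (hn : 16 ≤ n)
    (hmn : n ≤ 4 * m) (ha : α * m * log m ≤ a) (hb : b ≤ β * n * log n) :
    b ≤ 8 * β / α * a := by
  have hlogn : 0 < log n := Real.log_pos (by linarith)
  have hlogm : log n / 2 ≤ log m := by
    rw [← Real.log_sqrt (by linarith)]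
    refine Real.log_le_log (Real.sqrt_pos.2 (by linarith)) ?_
    rw [Real.sqrt_le_iff]
    constructor <;> nlinarith
  calc b ≤ β * n * log n := hb
    _ = 8 * β / α * (α * (n / 4) * (log n / 2)) := by field_simp; ring
    _ ≤ 8 * β / α * (α * m * log m) := by gcongr <;> nlinarith
    _ ≤ 8 * β / α * a := by gcongr

theorem log_le_two_mul_log_of_le_mul_log {n b : ℝ} (hb0 : 0 < b) (hn : 0 ≤ n) (hβ0 : 0 ≤ β)
    (hβ : 2 * β ≤ √n) (hb : b ≤ β * n * log n) : log b ≤ 2 * log n := by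
  have hsq : b ≤ n ^ 2 := calc
    b ≤ β * n * log n := hb
    _ ≤ β * n * (2 * √n) := by gcongr; exact log_le_two_mul_sqrt hn
    _ = n * (2 * β * √n) := by ring
    _ ≤ n * (√n * √n) := by gcongr
    _ = n ^ 2 := by rw [Real.mul_self_sqrt hn, sq]
  simpa only [Real.log_pow, Nat.cast_ofNat] using Real.log_le_log hb0 hsq

theorem four_mul_le_of_mul_le_mul_log {N n A L : ℝ} (hγ : 0 < γ) (hn : 0 ≤ n) (hA0 : 0 ≤ A)
    (hN : N * γ ≤ A * L) (hL : L ≤ 2 * log n) (hA : 16 * A ≤ γ * √n) : 4 * N ≤ n := by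
  refine le_of_mul_le_mul_left ?_ hγ
  calc γ * (4 * N) = 4 * (N * γ) := by ring
    _ ≤ 4 * (A * (2 * (2 * √n))) := by grw [hN, hL, log_le_two_mul_sqrt hn]
    _ = 16 * A * √n := by ring
    _ ≤ γ * √n * √n := by gcongr
    _ = γ * n := by rw [mul_assoc, Real.mul_self_sqrt hn]

end Estimates

section FirstPrimes

theorem le_two_mul_natCard_of_four_mul_card_not_le {Q : ℕ → Prop} [DecidablePred Q] {X : ℕ}
    (h : 4 * #{k ∈ Ioc (X / 4) X | ¬ Q k} ≤ X) :
    X ≤ 2 * Nat.card {k : ℕ // 1 ≤ k ∧ k ≤ X ∧ Q k} := by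
  have hcard : Nat.card {k : ℕ // 1 ≤ k ∧ k ≤ X ∧ Q k} = #{k ∈ Ioc 0 X | Q k} :=
    Nat.subtype_card _ fun k => by
      rw [mem_filter, mem_Ioc, and_assoc, Nat.lt_iff_add_one_le]
  have hsub : #{k ∈ Ioc (X / 4) X | Q k} ≤ #{k ∈ Ioc 0 X | Q k} :=
    card_le_card (filter_subset_filter _ (Ioc_subset_Ioc_left (Nat.zero_le _)))
  have hsplit := card_filter_add_card_filter_not (s := Ioc (X / 4) X) fun k => Q k
  rw [Nat.card_Ioc] at hsplit
  omega

theorem card_Ioc_not_cGood_mul_le {τ : ℕ → ℤ} {c γ K : ℝ} {m n : ℕ}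
    [DecidablePred fun k => CGood τ c (Nat.nth Nat.Prime (k - 1))]
    (hτ : ∀ p : ℕ, p.Prime → τ p ^ 2 < 4 * (p : ℤ) ^ 11) (hc : 1 ≤ c)
    (hpi : ∀ x : ℝ, 2 ≤ x → γ * x / log x ≤ π ⌊x⌋₊)
    (hK : (Nat.nth Nat.Prime (n - 1) : ℝ) ≤ K * Nat.nth Nat.Prime m) :
    #{k ∈ Ioc m n | ¬ CGood τ c (Nat.nth Nat.Prime (k - 1))} * γ ≤
      26 * c ^ 2 * K ^ c * log (Nat.nth Nat.Prime (n - 1)) := by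
  set B := {k ∈ Ioc m n | ¬ CGood τ c (Nat.nth Nat.Prime (k - 1))}
  have hmono : Monotone (Nat.nth Nat.Prime) := Nat.nth_monotone Nat.infinite_setOfPred_prime
  have hB : ∀ k ∈ B, m < k ∧ k ≤ n ∧ ¬ CGood τ c (Nat.nth Nat.Prime (k - 1)) := fun k hk => by
    simpa only [B, mem_filter, mem_Ioc, and_assoc] using hk
  have hinj : Set.InjOn (fun k => Nat.nth Nat.Prime (k - 1)) B := fun i hi j hj hij => by
    have hpred : i - 1 = j - 1 := Nat.nth_injective Nat.infinite_setOfPred_prime hij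
    have := (hB i hi).1
    have := (hB j hj).1
    omega
  rw [← card_image_of_injOn hinj]
  refine card_mul_le_of_not_cGood hτ hc hpi (mod_cast (Nat.prime_nth_prime m).two_le)
    (mod_cast (Nat.prime_nth_prime (n - 1)).one_le) hK ?_ ?_ ?_ <;>
    refine forall_mem_image.2 fun k hk => ?_ <;>
    obtain ⟨hmk, hkn, hbad⟩ := hB k hk
  · exact Nat.prime_nth_prime _
  · exact ⟨Nat.cast_le.2 (hmono (by omega)), Nat.cast_le.2 (hmono (by omega))⟩
  · exact hbad

end FirstPrimes

/-- **Density of good primes.**  Assume the Deligne bound `τ(p)² < 4p¹¹`, the Chebyshev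
bounds `α·k·log k ≤ p_k ≤ β·k·log k` for `k ≥ 2`, and `π(x) ≥ γ·x/log x` for `x ≥ 2`.
Then for every `X ≥ 816²·c⁴·(c+1)^{2(c+2)}·(2β/α)^{2c}·γ⁻²`, at least half of the first
`X` primes are `c`-good. -/
theorem stmt_14 (τ : ℕ → ℤ) (hτ : ∀ p : ℕ, p.Prime → τ p ^ 2 < 4 * (p : ℤ) ^ 11)
    (c : ℝ) (hc : 1 < c)
    (α β γ : ℝ) (hα : 0 < α) (hβ : 0 < β) (hγ : 0 < γ)
    (hlow : ∀ k : ℕ, 2 ≤ k →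
      α * k * Real.log k ≤ (Nat.nth Nat.Prime (k - 1) : ℝ))
    (hup : ∀ k : ℕ, 2 ≤ k →
      (Nat.nth Nat.Prime (k - 1) : ℝ) ≤ β * k * Real.log k)
    (hpi : ∀ x : ℝ, 2 ≤ x →
      γ * x / Real.log x ≤ (Nat.card {p : ℕ // p.Prime ∧ (p : ℝ) ≤ x} : ℝ))
    (X : ℕ)
    (hX : (816 : ℝ) ^ 2 * c ^ 4 * (c + 1) ^ (2 * (c + 2)) * (2 * β / α) ^ (2 * c) / γ ^ 2
      ≤ (X : ℝ)) :
    X ≤ 2 * Nat.card {k : ℕ // 1 ≤ k ∧ k ≤ X ∧ CGood τ c (Nat.nth Nat.Prime (k - 1))} := by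
  classical
  simp only [natCard_prime_le_eq_primeCounting] at hpi
  have hα_le : α ≤ 5 / 2 := le_five_halves_of_mul_log_le_nth_prime hlow
  have hαβ : α ≤ β := le_of_mul_log_le_nth_prime_le_mul_log hlow hup
  have hK : 8 ≤ 8 * β / α := by rw [le_div_iff₀ hα]; linarith
  have hβK : 2 * β ≤ 8 * β / α := by rw [le_div_iff₀ hα]; nlinarith
  have hsize : 816 * c ^ 2 * (8 * β / α) ^ c ≤ γ * √X :=
    mul_eight_mul_div_rpow_le_mul_sqrt hc.le hα hβ hγ hX
  have hroot : 816 * (8 * β / α) ≤ √X :=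
    mul_le_of_mul_sq_mul_rpow_le_mul (by norm_num) hc.le (by linarith) (Real.sqrt_nonneg _)
      (le_one_of_mul_div_log_le_primeCounting hpi) hsize
  have hX_ge : (16 : ℝ) ≤ X := by nlinarith [Real.mul_self_sqrt (Nat.cast_nonneg (α := ℝ) X)]
  have hX_ge_nat : 16 ≤ X := mod_cast hX_ge
  have hlast := hup X (by omega)
  have hratio : (Nat.nth Nat.Prime (X - 1) : ℝ) ≤ 8 * β / α * Nat.nth Nat.Prime (X / 4) :=
    le_eight_mul_div_mul_of_chebyshev hα hβ.le hX_ge (m := (X / 4 + 1 : ℕ)) (mod_cast (by omega))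
      (hlow (X / 4 + 1) (by omega)) hlast
  have hlog : log (Nat.nth Nat.Prime (X - 1)) ≤ 2 * log X :=
    log_le_two_mul_log_of_le_mul_log (mod_cast (Nat.prime_nth_prime _).pos) (by linarith) hβ.le
      (by linarith) hlast
  have hA : 0 ≤ 26 * c ^ 2 * (8 * β / α) ^ c := by positivity
  refine le_two_mul_natCard_of_four_mul_card_not_le ?_
  exact_mod_cast four_mul_le_of_mul_le_mul_log hγ (by linarith) hA
    (card_Ioc_not_cGood_mul_le hτ hc.le hpi hratio) hlog (by linarith)
end

section
/- Let τ be an integer-valued function on the prime numbers satisfying the Deligne bound τ(p)² < 4p^{11} for every prime p. Call a pair of primes (ℓ, p) bad if ℓ divides τ(p)² − 4p^{11}, and good otherwise; for a real c > 1, call a prime ℓ c-good if (ℓ, p) is good for at least half of the primes p ≤ ℓ^c. Then for every integer X > 2^{23+5c} · c⁴ · (c+1)^{2(c+2)}, at least half of the first X primes are c-good (i.e. #{k : 1 ≤ k ≤ X and p_k is c-good} ≥ X/2). -/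
/-!
Suppose that fewer than half of the first `X` primes are `c`-good. Discarding the first third of
them leaves a set `L` of at least `X / 6` primes in `[X / 3, p_X]`, none of which is `c`-good. Each
`ℓ ∈ L` divides `τ(p)² - 4p¹¹` for at least half of the primes `p ≤ ℓ ^ c`, whereas a nonzero
integer `D` has at most `log |D| / log Y` prime divisors `ℓ ≥ Y`. Counting the bad pairs in both
ways and comparing by means of Chebyshev's bound `π(x) ≥ 2x / (3 log x)` gives
`X ≤ 324 c² (36/5)^c (log X)^(c+1)`, which is false beyond the stated threshold.
-/

section Analysis

open Real

lemma exp_one_mul_log_le_self {x : ℝ} (hx : 0 < x) : exp 1 * log x ≤ x := by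
  simpa only [exp_log hx] using exp_one_mul_le_exp (x := log x)

lemma log_rpow_le_mul_sqrt {x s : ℝ} (hx : 1 ≤ x) (hs : 0 < s) :
    log x ^ s ≤ (2 * s / exp 1) ^ s * √x := by
  have hx_pos : 0 < x := by linarith
  have log_le : log x ≤ 2 * s / exp 1 * x ^ (1 / (2 * s)) := by
    have log_root_le := exp_one_mul_log_le_self (rpow_pos_of_pos hx_pos (1 / (2 * s)))
    rw [log_rpow hx_pos] at log_root_le
    field_simp at log_root_le ⊢
    linarith
  calc log x ^ s ≤ (2 * s / exp 1 * x ^ (1 / (2 * s))) ^ s :=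
        rpow_le_rpow (log_nonneg hx) log_le hs.le
    _ = (2 * s / exp 1) ^ s * √x := by
        rw [mul_rpow (by positivity) (by positivity), ← rpow_mul hx_pos.le, sqrt_eq_rpow]
        congr 2
        field_simp

lemma le_sq_of_le_mul_log_rpow {x s A : ℝ} (hx : 1 ≤ x) (hs : 0 < s) (hA : 0 ≤ A)
    (h : x ≤ A * log x ^ s) : x ≤ (A * (2 * s / exp 1) ^ s) ^ 2 := by
  have hx_pos : 0 < x := by linarith
  refine (sqrt_le_left (by positivity)).1 (le_of_mul_le_mul_right ?_ (sqrt_pos.2 hx_pos))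
  calc √x * √x = x := mul_self_sqrt hx_pos.le
    _ ≤ A * log x ^ s := h
    _ ≤ A * ((2 * s / exp 1) ^ s * √x) := by grw [log_rpow_le_mul_sqrt hx hs]
    _ = A * (2 * s / exp 1) ^ s * √x := by ring

lemma two_mul_div_exp_one_rpow_le {c : ℝ} (hc : 0 ≤ c) :
    (2 * (c + 1) / exp 1) ^ (c + 1) ≤ 20 / 27 * (20 / 27) ^ c * (c + 1) ^ (c + 1) := by
  have base_le : 2 * (c + 1) / exp 1 ≤ 20 / 27 * (c + 1) := by
    rw [div_le_iff₀ (exp_pos 1)]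
    nlinarith [exp_one_gt_d9]
  calc (2 * (c + 1) / exp 1) ^ (c + 1) ≤ (20 / 27 * (c + 1)) ^ (c + 1) := by gcongr
    _ = 20 / 27 * (20 / 27) ^ c * (c + 1) ^ (c + 1) := by
        rw [mul_rpow (by norm_num) (by positivity), rpow_add_one (by norm_num), mul_comm (20 / 27)]

lemma sq_le_threshold {c : ℝ} (hc : 0 ≤ c) :
    (324 * c ^ 2 * (36 / 5) ^ c * (2 * (c + 1) / exp 1) ^ (c + 1)) ^ 2 ≤
      2 ^ (23 + 5 * c) * c ^ 4 * (c + 1) ^ (2 * (c + 2)) := by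
  have base_rpow : ((36 / 5 : ℝ) ^ c * (20 / 27) ^ c) ^ 2 ≤ 2 ^ (5 * c) := by
    rw [← mul_rpow (by norm_num) (by norm_num), ← rpow_mul_natCast (by norm_num), mul_comm c,
      rpow_mul (by norm_num), rpow_mul (by norm_num)]
    gcongr
    norm_num
  have self_rpow : ((c + 1) ^ (c + 1)) ^ 2 ≤ (c + 1) ^ (2 * (c + 2)) := by
    rw [← rpow_mul_natCast (by positivity)]
    exact rpow_le_rpow_of_exponent_le (by linarith) (by push_cast; linarith)
  calc (324 * c ^ 2 * (36 / 5) ^ c * (2 * (c + 1) / exp 1) ^ (c + 1)) ^ 2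
      ≤ (324 * c ^ 2 * (36 / 5) ^ c * (20 / 27 * (20 / 27) ^ c * (c + 1) ^ (c + 1))) ^ 2 := by
        grw [two_mul_div_exp_one_rpow_le hc]
    _ = 240 ^ 2 * ((36 / 5 : ℝ) ^ c * (20 / 27) ^ c) ^ 2 * c ^ 4 * ((c + 1) ^ (c + 1)) ^ 2 := by
        ring
    _ ≤ 2 ^ 23 * 2 ^ (5 * c) * c ^ 4 * (c + 1) ^ (2 * (c + 2)) := by
        gcongr
        norm_num
    _ = 2 ^ (23 + 5 * c) * c ^ 4 * (c + 1) ^ (2 * (c + 2)) := by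
        rw [rpow_add two_pos]
        norm_num

lemma twelve_pow_four_le_threshold {c : ℝ} (hc : 1 ≤ c) :
    (12 : ℝ) ^ 4 ≤ 2 ^ (23 + 5 * c) * c ^ 4 * (c + 1) ^ (2 * (c + 2)) :=
  calc (12 : ℝ) ^ 4 ≤ 2 ^ (23 : ℝ) * 1 * 1 := by norm_num
    _ ≤ 2 ^ (23 + 5 * c) * c ^ 4 * (c + 1) ^ (2 * (c + 2)) := by
        gcongr
        · norm_num
        · linarith
        · exact one_le_pow₀ hc
        · exact one_le_rpow (by linarith) (by linarith)

lemma three_halves_mul_log_le_rpow {x : ℝ} (hx : 12 ^ 4 ≤ x) :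
    3 / 2 * log x ≤ x ^ (3 / 8 : ℝ) := by
  have hx_pos : 0 < x := by linarith
  have twelve_le : 12 ≤ x ^ (1 / 4 : ℝ) := by
    rw [one_div, le_rpow_inv_iff_of_pos (by norm_num) hx_pos.le (by norm_num)]
    exact_mod_cast hx
  calc 3 / 2 * log x ≤ 3 / 2 * (x ^ (1 / 8 : ℝ) / (1 / 8)) := by
        grw [log_le_rpow_div hx_pos.le (show (0 : ℝ) < 1 / 8 by norm_num)]
    _ = 12 * x ^ (1 / 8 : ℝ) := by ring
    _ ≤ x ^ (1 / 4 : ℝ) * x ^ (1 / 8 : ℝ) := by gcongr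
    _ = x ^ (3 / 8 : ℝ) := by rw [← rpow_add hx_pos]; norm_num

lemma log_le_of_le_mul_log {x z : ℝ} (hx : 0 < x) (hz : 12 ^ 4 ≤ z)
    (h : z ≤ 3 / 2 * log z * x) : log z ≤ 8 / 5 * log x := by
  have hz_pos : 0 < z := by linarith
  have z_le : z ≤ z ^ (3 / 8 : ℝ) * x := by grw [← three_halves_mul_log_le_rpow hz]; exact h
  have log_le := log_le_log hz_pos z_le
  rw [log_mul (by positivity) hx.ne', log_rpow hz_pos] at log_le
  linarith

lemma log_sq_sub_le {t n : ℝ} (h : t ^ 2 < 4 * n) : log (t ^ 2 - 4 * n) ≤ log (4 * n) := by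
  rw [← log_neg_eq_log]
  exact log_le_log (by linarith) (by linarith [sq_nonneg t])

end Analysis

section Counting

open Real

lemma le_mul_log_mul_primeCounting {x : ℝ} (hx : 2 ^ 8 ≤ x) :
    x ≤ 3 / 2 * log x * Nat.primeCounting ⌊x⌋₊ := by
  have chebyshev := Chebyshev.pi_ge' (x := x) (by linarith)
  rw [div_le_iff₀ (log_pos (by linarith))] at chebyshev
  have log_le_tangent : log (x + 2) ≤ (x + 2) / 2 ^ 8 - 1 + 8 * log 2 := by
    have log_le := log_le_sub_one_of_pos (show 0 < (x + 2) / 2 ^ 8 by positivity)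
    rw [log_div (by positivity) (by positivity), log_pow] at log_le
    push_cast at log_le
    linarith
  nlinarith [log_two_gt_d9, log_two_lt_d9]

lemma primeCounting_nth_prime (n : ℕ) : Nat.primeCounting (Nat.nth Nat.Prime n) = n + 1 :=
  Nat.count_nth_succ_of_infinite Nat.infinite_setOfPred_prime n

-- `Nat.nth` counts from `0`: for `n ≥ 1` the `n`-th prime is `Nat.nth Nat.Prime (n - 1)`.
lemma le_nth_prime_pred (n : ℕ) : n ≤ Nat.nth Nat.Prime (n - 1) := by
  have := Nat.add_two_le_nth_prime (n - 1)
  omega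

lemma nth_prime_pred_le_mul_log_self {n : ℕ} (hn : 2 ^ 8 ≤ n) :
    (Nat.nth Nat.Prime (n - 1) : ℝ) ≤ 3 / 2 * log (Nat.nth Nat.Prime (n - 1)) * n := by
  have n_le : n ≤ Nat.nth Nat.Prime (n - 1) := le_nth_prime_pred n
  have chebyshev := le_mul_log_mul_primeCounting
    (x := Nat.nth Nat.Prime (n - 1)) (by exact_mod_cast hn.trans n_le)
  rwa [Nat.floor_natCast, primeCounting_nth_prime, Nat.sub_add_cancel (by omega)] at chebyshev

lemma log_nth_prime_pred_le {n : ℕ} (hn : 12 ^ 4 ≤ n) :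
    log (Nat.nth Nat.Prime (n - 1)) ≤ 8 / 5 * log n :=
  log_le_of_le_mul_log (by norm_cast; omega) (by exact_mod_cast hn.trans (le_nth_prime_pred n))
    (nth_prime_pred_le_mul_log_self (by omega))

lemma nth_prime_pred_le {n : ℕ} (hn : 12 ^ 4 ≤ n) :
    (Nat.nth Nat.Prime (n - 1) : ℝ) ≤ 12 / 5 * log n * n :=
  calc (Nat.nth Nat.Prime (n - 1) : ℝ) ≤ 3 / 2 * log (Nat.nth Nat.Prime (n - 1)) * n :=
        nth_prime_pred_le_mul_log_self (by omega)
    _ ≤ 3 / 2 * (8 / 5 * log n) * n := by grw [log_nth_prime_pred_le hn]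
    _ = 12 / 5 * log n * n := by ring

lemma card_primes_le_eq_card_filter {x : ℝ} (hx : 0 ≤ x) (Q : ℕ → Prop) [DecidablePred Q] :
    Nat.card {p : ℕ // p.Prime ∧ (p : ℝ) ≤ x ∧ Q p} = ((Nat.primesLE ⌊x⌋₊).filter Q).card := by
  refine Nat.subtype_card _ fun p ↦ ?_
  rw [Finset.mem_filter, Nat.mem_primesLE, Nat.le_floor_iff hx]
  tauto

lemma card_primesLE_le (n : ℕ) : (Nat.primesLE n).card ≤ n := by
  rw [Nat.primesLE_eq_filter_Icc_one]
  exact (Finset.card_filter_le _ _).trans_eq (by rw [Nat.card_Icc, Nat.add_sub_cancel])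

-- `Real.log` is even, so `log D` is `log |D|`.
lemma card_mul_log_le_log_of_primes_dvd {L : Finset ℕ} {D : ℤ} {Y : ℝ} (hY : 0 < Y) (hD : D ≠ 0)
    (prime : ∀ ℓ ∈ L, ℓ.Prime) (le : ∀ ℓ ∈ L, Y ≤ ℓ) (dvd : ∀ ℓ ∈ L, (ℓ : ℤ) ∣ D) :
    L.card * log Y ≤ log D := by
  have prod_dvd : ∏ ℓ ∈ L, ℓ ∣ D.natAbs :=
    Finset.prod_primes_dvd _ (fun ℓ hℓ ↦ (prime ℓ hℓ).prime) fun ℓ hℓ ↦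
      Int.natCast_dvd.1 (dvd ℓ hℓ)
  have pow_le : Y ^ L.card ≤ |(D : ℝ)| :=
    calc Y ^ L.card = ∏ _ ∈ L, Y := (Finset.prod_const Y).symm
      _ ≤ ∏ ℓ ∈ L, (ℓ : ℝ) := Finset.prod_le_prod (fun _ _ ↦ hY.le) le
      _ ≤ (D.natAbs : ℝ) := by
          rw [← Nat.cast_prod]
          exact_mod_cast Nat.le_of_dvd (Int.natAbs_pos.2 hD) prod_dvd
      _ = |(D : ℝ)| := by rw [Nat.cast_natAbs, Int.cast_abs]
  rw [← log_pow, ← log_abs (D : ℝ)]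
  exact log_le_log (by positivity) pow_le

lemma card_mul_mul_log_le_of_primes_dvd {ι : Type*} {L : Finset ℕ} {P : Finset ι} {f : ι → ℤ}
    {Y B m : ℝ} (hY : 1 < Y) (prime : ∀ ℓ ∈ L, ℓ.Prime) (le : ∀ ℓ ∈ L, Y ≤ ℓ)
    (ne_zero : ∀ p ∈ P, f p ≠ 0) (log_le : ∀ p ∈ P, log (f p) ≤ B)
    (le_card : ∀ ℓ ∈ L, m ≤ (P.filter fun p ↦ (ℓ : ℤ) ∣ f p).card) :
    L.card * m * log Y ≤ P.card * B := by
  have log_Y_pos : 0 < log Y := log_pos hY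
  have card_divisors_le (p : ι) (hp : p ∈ P) :
      ((L.filter fun ℓ : ℕ ↦ (ℓ : ℤ) ∣ f p).card : ℝ) ≤ B / log Y := by
    rw [le_div_iff₀ log_Y_pos]
    refine (card_mul_log_le_log_of_primes_dvd (by linarith) (ne_zero p hp) ?_ ?_ ?_).trans
      (log_le p hp)
    · exact fun ℓ hℓ ↦ prime ℓ (Finset.mem_of_mem_filter ℓ hℓ)
    · exact fun ℓ hℓ ↦ le ℓ (Finset.mem_of_mem_filter ℓ hℓ)
    · exact fun ℓ hℓ ↦ (Finset.mem_filter.1 hℓ).2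
  have double_count : L.card • m ≤ P.card • (B / log Y) :=
    Finset.card_nsmul_le_card_nsmul (fun (ℓ : ℕ) p ↦ (ℓ : ℤ) ∣ f p) le_card card_divisors_le
  rwa [nsmul_eq_mul, nsmul_eq_mul, ← mul_div_assoc, le_div_iff₀ log_Y_pos] at double_count

lemma le_six_mul_card_filter_not {X : ℕ} {G : ℕ → Prop} [DecidablePred G]
    (h : 2 * ((Finset.Icc 1 X).filter G).card < X) :
    X ≤ 6 * ((Finset.Ioc (X / 3) X).filter fun k ↦ ¬ G k).card := by
  have card_not_add := Finset.card_filter_add_card_filter_not (s := Finset.Ioc (X / 3) X) G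
  have card_le : ((Finset.Ioc (X / 3) X).filter G).card ≤ ((Finset.Icc 1 X).filter G).card := by
    gcongr
    intro k hk
    simp only [Finset.mem_Ioc, Finset.mem_Icc] at hk ⊢
    omega
  rw [Nat.card_Ioc] at card_not_add
  omega

end Counting

section BadPairs

open Real

variable {τ : ℕ → ℤ} {c : ℝ}

instance : DecidableRel (BadPair τ) := fun _ _ ↦ inferInstanceAs (Decidable (_ ∣ _))

lemma primeCounting_le_two_mul_card_badPair {ℓ : ℕ} (h : ¬ CGood τ c ℓ) :
    Nat.primeCounting ⌊(ℓ : ℝ) ^ c⌋₊ ≤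
      2 * ((Nat.primesLE ⌊(ℓ : ℝ) ^ c⌋₊).filter (BadPair τ ℓ)).card := by
  have rpow_nonneg : 0 ≤ (ℓ : ℝ) ^ c := by positivity
  have card_all := card_primes_le_eq_card_filter rpow_nonneg fun _ ↦ True
  simp only [and_true, Finset.filter_true] at card_all
  have card_bad_add_card_good := Finset.card_filter_add_card_filter_not
    (s := Nat.primesLE ⌊(ℓ : ℝ) ^ c⌋₊) (BadPair τ ℓ)
  rw [CGood, card_primes_le_eq_card_filter rpow_nonneg, card_all] at h
  rw [← Nat.primesLE_card_eq_primeCounting]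
  omega

lemma primeCounting_le_two_mul_card_badPair_of_le (hc : 0 ≤ c) {ℓ : ℕ} {Y Z : ℝ} (hY : 0 ≤ Y)
    (ge : Y ≤ ℓ) (le : ℓ ≤ Z) (h : ¬ CGood τ c ℓ) :
    Nat.primeCounting ⌊Y ^ c⌋₊ ≤ 2 * ((Nat.primesLE ⌊Z ^ c⌋₊).filter (BadPair τ ℓ)).card :=
  calc Nat.primeCounting ⌊Y ^ c⌋₊ ≤ Nat.primeCounting ⌊(ℓ : ℝ) ^ c⌋₊ :=
        Nat.monotone_primeCounting (Nat.floor_mono (rpow_le_rpow hY ge hc))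
    _ ≤ 2 * ((Nat.primesLE ⌊(ℓ : ℝ) ^ c⌋₊).filter (BadPair τ ℓ)).card :=
        primeCounting_le_two_mul_card_badPair h
    _ ≤ 2 * ((Nat.primesLE ⌊Z ^ c⌋₊).filter (BadPair τ ℓ)).card := by
        grw [Nat.primesLE_mono (Nat.floor_mono (rpow_le_rpow ℓ.cast_nonneg le hc))]

lemma log_sq_sub_four_mul_pow_le {p : ℕ} {x : ℝ} (hτ : τ p ^ 2 < 4 * (p : ℤ) ^ 11) (hp : 0 < p)
    (hx : (p : ℝ) ≤ x) :
    log ((τ p ^ 2 - 4 * (p : ℤ) ^ 11 : ℤ) : ℝ) ≤ 2 + 11 * log x := by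
  have deligne : (τ p : ℝ) ^ 2 < 4 * (p : ℝ) ^ 11 := by exact_mod_cast hτ
  calc log ((τ p ^ 2 - 4 * (p : ℤ) ^ 11 : ℤ) : ℝ) = log ((τ p : ℝ) ^ 2 - 4 * (p : ℝ) ^ 11) := by
        push_cast; rfl
    _ ≤ log (4 * (p : ℝ) ^ 11) := log_sq_sub_le deligne
    _ = 2 * log 2 + 11 * log p := by
        rw [log_mul (by norm_num) (by positivity), log_four_eq, log_pow, Nat.cast_ofNat]
    _ ≤ 2 + 11 * log x := by
        grw [hx]
        linarith [log_two_lt_d9]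

lemma card_not_cGood_mul_primeCounting_le
    (hτ : ∀ p : ℕ, p.Prime → τ p ^ 2 < 4 * (p : ℤ) ^ 11) (hc : 0 ≤ c) {L : Finset ℕ} {Y Z : ℝ}
    (hY : 1 < Y) (hZ : 1 ≤ Z) (prime : ∀ ℓ ∈ L, ℓ.Prime) (ge : ∀ ℓ ∈ L, Y ≤ ℓ)
    (le : ∀ ℓ ∈ L, (ℓ : ℝ) ≤ Z) (not_good : ∀ ℓ ∈ L, ¬ CGood τ c ℓ) :
    L.card * (Nat.primeCounting ⌊Y ^ c⌋₊ / 2 : ℝ) * log Y ≤ Z ^ c * (2 + 11 * c * log Z) := by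
  have log_Z_nonneg : 0 ≤ log Z := log_nonneg hZ
  have card_primesLE_le : ((Nat.primesLE ⌊Z ^ c⌋₊).card : ℝ) ≤ Z ^ c := by
    grw [card_primesLE_le, Nat.floor_le (by positivity)]
  refine (card_mul_mul_log_le_of_primes_dvd (P := Nat.primesLE ⌊Z ^ c⌋₊)
    (f := fun p ↦ τ p ^ 2 - 4 * (p : ℤ) ^ 11) hY prime ge ?ne_zero ?log_le ?le_card).trans
    (mul_le_mul_of_nonneg_right card_primesLE_le (by positivity))
  case ne_zero => exact fun p hp ↦ (sub_neg.2 (hτ p (Nat.prime_of_mem_primesLE hp))).ne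
  case log_le =>
    intro p hp
    have p_le : (p : ℝ) ≤ Z ^ c :=
      (Nat.le_floor_iff (by positivity)).1 (Nat.le_of_mem_primesLE hp)
    have p_prime := Nat.prime_of_mem_primesLE hp
    refine (log_sq_sub_four_mul_pow_le (hτ p p_prime) p_prime.pos p_le).trans_eq ?_
    rw [log_rpow (by linarith)]
    ring
  case le_card =>
    intro ℓ hℓ
    rw [div_le_iff₀' two_pos]
    norm_cast
    exact primeCounting_le_two_mul_card_badPair_of_le hc (by linarith) (ge ℓ hℓ) (le ℓ hℓ)
      (not_good ℓ hℓ)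

lemma card_not_cGood_mul_rpow_le (hτ : ∀ p : ℕ, p.Prime → τ p ^ 2 < 4 * (p : ℤ) ^ 11) (hc : 1 ≤ c)
    {L : Finset ℕ} {Y Z : ℝ} (hY : 2 ^ 8 ≤ Y) (hZ : 1 ≤ Z) (prime : ∀ ℓ ∈ L, ℓ.Prime)
    (ge : ∀ ℓ ∈ L, Y ≤ ℓ) (le : ∀ ℓ ∈ L, (ℓ : ℝ) ≤ Z) (not_good : ∀ ℓ ∈ L, ¬ CGood τ c ℓ) :
    L.card * Y ^ c ≤ 3 * c * (Z ^ c * (2 + 11 * c * log Z)) := by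
  have chebyshev : Y ^ c ≤ 3 / 2 * (c * log Y) * Nat.primeCounting ⌊Y ^ c⌋₊ := by
    rw [← log_rpow (by linarith)]
    exact le_mul_log_mul_primeCounting (hY.trans (self_le_rpow_of_one_le (by linarith) hc))
  calc L.card * Y ^ c
      ≤ L.card * (3 / 2 * (c * log Y) * Nat.primeCounting ⌊Y ^ c⌋₊) := by gcongr
    _ = 3 * c * (L.card * (Nat.primeCounting ⌊Y ^ c⌋₊ / 2 : ℝ) * log Y) := by ring
    _ ≤ 3 * c * (Z ^ c * (2 + 11 * c * log Z)) := by
        grw [card_not_cGood_mul_primeCounting_le hτ (by linarith) (by linarith) hZ prime ge le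
          not_good]

lemma le_mul_log_rpow_of_not_cGood (hτ : ∀ p : ℕ, p.Prime → τ p ^ 2 < 4 * (p : ℤ) ^ 11)
    (hc : 1 ≤ c) {X : ℕ} (hX : 12 ^ 4 ≤ X) {L : Finset ℕ} (card_ge : X ≤ 6 * L.card)
    (prime : ∀ ℓ ∈ L, ℓ.Prime) (ge : ∀ ℓ ∈ L, X ≤ 3 * ℓ)
    (le : ∀ ℓ ∈ L, ℓ ≤ Nat.nth Nat.Prime (X - 1)) (not_good : ∀ ℓ ∈ L, ¬ CGood τ c ℓ) :
    (X : ℝ) ≤ 324 * c ^ 2 * (36 / 5) ^ c * log X ^ (c + 1) := by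
  set z := Nat.nth Nat.Prime (X - 1)
  have hX_real : (12 : ℝ) ^ 4 ≤ X := by exact_mod_cast hX
  have X_le_z : (X : ℝ) ≤ z := by exact_mod_cast le_nth_prime_pred X
  have log_X_ge : 5 ≤ log X := by
    have := log_le_log (by norm_num) (show (2 : ℝ) ^ 8 ≤ X by linarith)
    rw [log_pow, Nat.cast_ofNat] at this
    linarith [log_two_gt_d9]
  have log_bound : 2 + 11 * c * log z ≤ 18 * c * log X := by
    grw [log_nth_prime_pred_le hX]
    nlinarith
  have z_rpow_le : (z : ℝ) ^ c ≤ (36 / 5) ^ c * log X ^ c * (X / 3) ^ c := by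
    rw [← mul_rpow (by norm_num) (by linarith), ← mul_rpow (by positivity) (by positivity)]
    gcongr
    linarith [nth_prime_pred_le hX]
  have count : L.card * (X / 3 : ℝ) ^ c ≤ 3 * c * ((z : ℝ) ^ c * (2 + 11 * c * log z)) := by
    refine card_not_cGood_mul_rpow_le hτ hc (by linarith) (by linarith) prime (fun ℓ hℓ ↦ ?_)
      (fun ℓ hℓ ↦ by exact_mod_cast le ℓ hℓ) not_good
    rw [div_le_iff₀' three_pos]
    exact_mod_cast ge ℓ hℓ
  refine le_of_mul_le_mul_right ?_ (show 0 < (X / 3 : ℝ) ^ c by positivity)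
  calc (X : ℝ) * (X / 3) ^ c ≤ 6 * L.card * (X / 3) ^ c := by
        gcongr
        exact_mod_cast card_ge
    _ ≤ 6 * (3 * c * ((z : ℝ) ^ c * (2 + 11 * c * log z))) := by grw [mul_assoc, count]
    _ ≤ 6 * (3 * c * ((36 / 5) ^ c * log X ^ c * (X / 3) ^ c * (18 * c * log X))) := by gcongr
    _ = 324 * c ^ 2 * (36 / 5) ^ c * log X ^ (c + 1) * (X / 3) ^ c := by
        rw [rpow_add_one (by linarith)]
        ring

lemma exists_finset_primes_not_cGood {X : ℕ}
    (h : 2 * Nat.card {k : ℕ // 1 ≤ k ∧ k ≤ X ∧ CGood τ c (Nat.nth Nat.Prime (k - 1))} < X) :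
    ∃ L : Finset ℕ, X ≤ 6 * L.card ∧ (∀ ℓ ∈ L, ℓ.Prime) ∧ (∀ ℓ ∈ L, X ≤ 3 * ℓ) ∧
      (∀ ℓ ∈ L, ℓ ≤ Nat.nth Nat.Prime (X - 1)) ∧ ∀ ℓ ∈ L, ¬ CGood τ c ℓ := by
  classical
  let G (k : ℕ) : Prop := CGood τ c (Nat.nth Nat.Prime (k - 1))
  have card_good : Nat.card {k : ℕ // 1 ≤ k ∧ k ≤ X ∧ G k} = ((Finset.Icc 1 X).filter G).card :=
    Nat.subtype_card _ fun k ↦ by rw [Finset.mem_filter, Finset.mem_Icc, and_assoc]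
  have nth_injOn : Set.InjOn (fun k ↦ Nat.nth Nat.Prime (k - 1))
      ((Finset.Ioc (X / 3) X).filter fun k ↦ ¬ G k) := by
    intro j hj k hk hjk
    have := Nat.nth_injective Nat.infinite_setOfPred_prime hjk
    simp only [Finset.coe_filter, Set.mem_ofPred_eq, Finset.mem_Ioc] at hj hk
    omega
  refine ⟨((Finset.Ioc (X / 3) X).filter fun k ↦ ¬ G k).image fun k ↦ Nat.nth Nat.Prime (k - 1),
    ?_, ?_⟩
  · rw [Finset.card_image_of_injOn nth_injOn]
    exact le_six_mul_card_filter_not (card_good ▸ h)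
  · simp only [Finset.forall_mem_image, Finset.mem_filter, Finset.mem_Ioc]
    refine ⟨fun k _ ↦ Nat.prime_nth_prime _, fun k hk ↦ ?_, fun k hk ↦ ?_, fun k hk ↦ hk.2⟩
    · have := le_nth_prime_pred k
      omega
    · exact Nat.nth_monotone Nat.infinite_setOfPred_prime (by omega)

end BadPairs

/-- **Effective bound for the density of good primes.**  Assume the Deligne bound
`τ(p)² < 4p¹¹`.  Then for every `X > 2^{23+5c}·c⁴·(c+1)^{2(c+2)}`, at least half of the
first `X` primes are `c`-good. -/
theorem stmt_15 (τ : ℕ → ℤ) (hτ : ∀ p : ℕ, p.Prime → τ p ^ 2 < 4 * (p : ℤ) ^ 11)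
    (c : ℝ) (hc : 1 < c) (X : ℕ)
    (hX : (2 : ℝ) ^ (23 + 5 * c) * c ^ 4 * (c + 1) ^ (2 * (c + 2)) < (X : ℝ)) :
    X ≤ 2 * Nat.card {k : ℕ // 1 ≤ k ∧ k ≤ X ∧ CGood τ c (Nat.nth Nat.Prime (k - 1))} := by
  by_contra! h
  obtain ⟨L, card_ge, prime, ge, le, not_good⟩ := exists_finset_primes_not_cGood h
  have hX_ge : (12 : ℝ) ^ 4 ≤ X := (twelve_pow_four_le_threshold hc.le).trans hX.le
  have X_le_mul_log_rpow :=
    le_mul_log_rpow_of_not_cGood hτ hc.le (by exact_mod_cast hX_ge) card_ge prime ge le not_good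
  have X_le_sq :=
    le_sq_of_le_mul_log_rpow (by linarith) (by linarith) (by positivity) X_le_mul_log_rpow
  exact (X_le_sq.trans (sq_le_threshold (by linarith))).not_gt hX
end
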